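/- arXiv:2012.14698 — 10 statements merged into one kernel-verified Lean document; each statement's English description precedes it below -/
import Mathlib

section
/- Let G ⊆ ℝ^p_+ × {0,1}^n be a set such that for every fixed binary vector z̄ ∈ {0,1}^n the slice G|_{z=z̄} := G ∩ {(y,z) : z = z̄} is convex, and for each j ∈ [p] let K_j ⊆ ℝ^{q_j} be a convex cone, A^j ∈ ℝ^{q_j×m}, B^j ∈ ℝ^{q_j}. Define Q(G,{K_j}) := {(x,y,z) ∈ ℝ^{mp} × ℝ^p × {0,1}^n : (y,z) ∈ G, A^j x^j + B^j y_j ∈ K_j for all j ∈ [p]}, where x = (x^1,…,x^p) with each x^j ∈ ℝ^m. Then the convex hull of Q(G,{K_j}) equals Q̂(G,{K_j}) := {(x,y,z) ∈ ℝ^{mp} × ℝ^p × [0,1]^n : (y,z) ∈ conv(G), A^j x^j + B^j y_j ∈ K_j for all j ∈ [p]}. -/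
/-- Proposition 1 (conv-trick): for `G ⊆ ℝ^p_+ × {0,1}^n` with convex slices at every
fixed binary `z̄`, and convex cones `K j`, the convex hull of
`Q(G,{K_j}) = {(x,y,z) : (y,z) ∈ G, Aʲxʲ + Bʲyⱼ ∈ K_j ∀j}` equals
`Q̂(G,{K_j}) = {(x,y,z) ∈ ℝ^{mp} × ℝ^p × [0,1]^n : (y,z) ∈ conv(G), Aʲxʲ + Bʲyⱼ ∈ K_j ∀j}`. -/
theorem conv_trick (p n m : ℕ) (q : Fin p → ℕ)
    (G : Set ((Fin p → ℝ) × (Fin n → ℝ)))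
    (hGsub : ∀ yz ∈ G, (∀ j, 0 ≤ yz.1 j) ∧ (∀ i, yz.2 i = 0 ∨ yz.2 i = 1))
    (hGslice : ∀ zbar : Fin n → ℝ, (∀ i, zbar i = 0 ∨ zbar i = 1) →
      Convex ℝ {yz ∈ G | yz.2 = zbar})
    (K : ∀ j, Set (Fin (q j) → ℝ))
    (hKadd : ∀ j, ∀ a ∈ K j, ∀ b ∈ K j, a + b ∈ K j)
    (hKsmul : ∀ j, ∀ c : ℝ, 0 ≤ c → ∀ a ∈ K j, c • a ∈ K j)
    (A : ∀ j, Matrix (Fin (q j)) (Fin m) ℝ) (B : ∀ j, Fin (q j) → ℝ)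
    (Q Qhat : Set ((Fin p → Fin m → ℝ) × (Fin p → ℝ) × (Fin n → ℝ)))
    (hQ : Q = {w | (w.2.1, w.2.2) ∈ G ∧
      ∀ j, (A j).mulVec (w.1 j) + w.2.1 j • B j ∈ K j})
    (hQhat : Qhat = {w | (∀ i, w.2.2 i ∈ Set.Icc (0:ℝ) 1) ∧
      (w.2.1, w.2.2) ∈ convexHull ℝ G ∧
      ∀ j, (A j).mulVec (w.1 j) + w.2.1 j • B j ∈ K j}) :
    convexHull ℝ Q = Qhat := by
  subst hQ hQhat
  apply Set.Subset.antisymm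
  · apply convexHull_min
    · rintro ⟨x, y, z⟩ ⟨hG, hK⟩
      refine ⟨fun i => ?_, subset_convexHull ℝ G hG, hK⟩
      rcases (hGsub _ hG).2 i with h | h <;> simp only at h ⊢ <;> rw [h] <;> simp
    · rintro ⟨x, y, z⟩ ⟨h1, h2, h3⟩ ⟨x', y', z'⟩ ⟨h1', h2', h3'⟩ a b ha hb hab
      refine ⟨fun i => ?_, ?_, fun j => ?_⟩
      · exact (convex_Icc (0:ℝ) 1) (h1 i) (h1' i) ha hb hab
      · exact (convex_convexHull ℝ G) h2 h2' ha hb hab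
      · have := hKadd j _ (hKsmul j a ha _ (h3 j)) _ (hKsmul j b hb _ (h3' j))
        convert this using 1
        simp only [Prod.fst_add, Prod.snd_add, Prod.smul_fst, Prod.smul_snd, Pi.add_apply,
          Pi.smul_apply, Matrix.mulVec_add, Matrix.mulVec_smul, smul_eq_mul]
        module
  · rintro ⟨x, y, z⟩ ⟨-, h2, h3⟩
    simp only at h2 h3
    obtain ⟨ι, _, v, w, hv, -, hw, hw1, hs⟩ := eq_pos_convex_span_of_mem_convexHull h2
    have hvG : ∀ k, v k ∈ G := fun k => hv ⟨k, rfl⟩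
    have hy : ∀ j, ∑ k, w k * (v k).1 j = y j := by
      intro j
      have := congrFun (congrArg Prod.fst hs) j
      simpa [Prod.fst_sum, Finset.sum_apply] using this
    have hz : ∑ k, w k • (v k).2 = z := by
      have := congrArg Prod.snd hs
      simpa [Prod.snd_sum] using this
    have hy0 : ∀ j, y j = 0 → ∀ k, (v k).1 j = 0 := by
      intro j hj k
      have h := hy j
      rw [hj, Finset.sum_eq_zero_iff_of_nonneg
        (fun k _ => mul_nonneg (hw k).le ((hGsub _ (hvG k)).1 j))] at h
      exact (mul_eq_zero.mp (h k (Finset.mem_univ k))).resolve_left (hw k).ne'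
    let c : ι → Fin p → ℝ := fun k j => if y j = 0 then 1 else (v k).1 j / y j
    have hynn : ∀ j, 0 ≤ y j := fun j => by
      rw [← hy j]
      exact Finset.sum_nonneg (fun k _ => mul_nonneg (hw k).le ((hGsub _ (hvG k)).1 j))
    have hc0 : ∀ k j, 0 ≤ c k j := by
      intro k j
      simp only [c]
      split_ifs
      · exact zero_le_one
      · exact div_nonneg ((hGsub _ (hvG k)).1 j) (hynn j)
    have hcy : ∀ k j, (v k).1 j = c k j * y j := by
      intro k j
      simp only [c]
      split_ifs with h
      · rw [hy0 j h k, h, mul_zero]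
      · field_simp
    have hcs : ∀ j, ∑ k, w k * c k j = 1 := by
      intro j
      by_cases h : y j = 0
      · simp [c, h, hw1]
      · simp only [c, if_neg h, ← mul_div_assoc]
        rw [← Finset.sum_div, hy j, div_self h]
    have key : (x, y, z) = ∑ k, w k • ((fun j => c k j • x j, (v k).1, (v k).2) :
        (Fin p → Fin m → ℝ) × (Fin p → ℝ) × (Fin n → ℝ)) := by
      refine Prod.ext ?_ (Prod.ext ?_ ?_)
      · ext j i
        simp only [Prod.fst_sum, Finset.sum_apply, Prod.smul_fst, Pi.smul_apply, smul_eq_mul,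
          ← mul_assoc]
        rw [← Finset.sum_mul, hcs j, one_mul]
      · ext j
        simp [Prod.fst_sum, Prod.snd_sum, Finset.sum_apply, hy j]
      · simp [Prod.snd_sum, hz]
    rw [key]
    refine (convex_convexHull ℝ _).sum_mem (fun k _ => (hw k).le) hw1 (fun k _ => ?_)
    apply subset_convexHull
    refine ⟨hvG k, fun j => ?_⟩
    have := hKsmul j _ (hc0 k j) _ (h3 j)
    convert this using 1
    simp only [hcy k j, Matrix.mulVec_smul, smul_add, smul_smul]
end

section
/- For each j ∈ [p], let f_j : {0,1}^n → ℝ_+ be a nonnegative function and K_j ⊆ ℝ^{q_j} a convex cone containing the origin, and let A^j ∈ ℝ^{q_j×m}, B^j ∈ ℝ^{q_j}. Then conv(S({f_j},{K_j})) = Ŝ({f_j},{K_j}). -/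
/-- Theorem 1: for nonnegative functions `f_j : {0,1}^n → ℝ_+` and convex cones `K_j`
containing the origin, `conv(S({f_j},{K_j})) = Ŝ({f_j},{K_j})`. -/
theorem conv_S_eq_Shat (p n m : ℕ) (q : Fin p → ℕ)
    (f : Fin p → (Fin n → ℝ) → ℝ)
    (hf : ∀ j, ∀ z : Fin n → ℝ, (∀ i, z i = 0 ∨ z i = 1) → 0 ≤ f j z)
    (K : ∀ j, Set (Fin (q j) → ℝ))
    (hK0 : ∀ j, (0 : Fin (q j) → ℝ) ∈ K j)
    (hKadd : ∀ j, ∀ a ∈ K j, ∀ b ∈ K j, a + b ∈ K j)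
    (hKsmul : ∀ j, ∀ c : ℝ, 0 ≤ c → ∀ a ∈ K j, c • a ∈ K j)
    (A : ∀ j, Matrix (Fin (q j)) (Fin m) ℝ) (B : ∀ j, Fin (q j) → ℝ)
    (S Shat : Set ((Fin p → Fin m → ℝ) × (Fin n → ℝ)))
    (G : Set ((Fin p → ℝ) × (Fin n → ℝ)))
    (hS : S = {w | (∀ i, w.2 i = 0 ∨ w.2 i = 1) ∧ ∃ y : Fin p → ℝ,
      ∀ j, f j w.2 ≤ y j ∧ (A j).mulVec (w.1 j) + y j • B j ∈ K j})
    (hG : G = {yz | (∀ i, yz.2 i = 0 ∨ yz.2 i = 1) ∧ ∀ j, f j yz.2 ≤ yz.1 j})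
    (hShat : Shat = {w | (∀ i, w.2 i ∈ Set.Icc (0:ℝ) 1) ∧ ∃ y : Fin p → ℝ,
      (y, w.2) ∈ convexHull ℝ G ∧
      ∀ j, (A j).mulVec (w.1 j) + y j • B j ∈ K j}) :
    convexHull ℝ S = Shat := by
  subst hS hG hShat
  apply Set.Subset.antisymm
  · apply convexHull_min
    · rintro ⟨x, z⟩ ⟨hz, y, hy⟩
      refine ⟨fun i => ?_, y, subset_convexHull ℝ _ ⟨hz, fun j => (hy j).1⟩, fun j => (hy j).2⟩
      rcases hz i with h | h <;> rw [h] <;> simp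
    · rintro ⟨x, z⟩ ⟨hz, y, hy, hK⟩ ⟨x', z'⟩ ⟨hz', y', hy', hK'⟩ a b ha hb hab
      refine ⟨fun i => ?_, a • y + b • y', ?_, fun j => ?_⟩
      · exact convex_Icc (0:ℝ) 1 (hz i) (hz' i) ha hb hab
      · exact convex_convexHull ℝ _ hy hy' ha hb hab
      · have h := hKadd j _ (hKsmul j a ha _ (hK j)) _ (hKsmul j b hb _ (hK' j))
        convert h using 1
        simp only [Prod.smul_mk, Prod.mk_add_mk, Pi.add_apply, Pi.smul_apply, Matrix.mulVec_add,
          Matrix.mulVec_smul, smul_eq_mul]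
        module
  · rintro ⟨x, z⟩ ⟨hz, y, hy, hK⟩
    obtain ⟨ι, _, g, w, hg, -, hw, hw1, hsum⟩ := eq_pos_convex_span_of_mem_convexHull hy
    have hgG : ∀ k, (∀ i, (g k).2 i = 0 ∨ (g k).2 i = 1) ∧ ∀ j, f j (g k).2 ≤ (g k).1 j :=
      fun k => hg ⟨k, rfl⟩
    have hg0 : ∀ k j, 0 ≤ (g k).1 j := fun k j => (hf j _ (hgG k).1).trans ((hgG k).2 j)
    have hy1 : ∀ j, ∑ k, w k * (g k).1 j = y j := fun j => by
      have := congrFun (congrArg Prod.fst hsum) j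
      simpa [Prod.fst_sum, Finset.sum_apply] using this
    have hz1 : ∑ k, w k • (g k).2 = z := by
      have := congrArg Prod.snd hsum
      simpa [Prod.snd_sum] using this
    have hzero : ∀ j, y j = 0 → ∀ k, (g k).1 j = 0 := fun j hj k => by
      have h := hy1 j
      rw [hj, Finset.sum_eq_zero_iff_of_nonneg
        (fun k _ => mul_nonneg (hw k).le (hg0 k j))] at h
      exact (mul_eq_zero.mp (h k (Finset.mem_univ k))).resolve_left (hw k).ne'
    have hynn : ∀ j, 0 ≤ y j := fun j => by
      rw [← hy1 j]
      exact Finset.sum_nonneg fun k _ => mul_nonneg (hw k).le (hg0 k j)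
    let c : ι → Fin p → ℝ := fun k j => if y j = 0 then 1 else (g k).1 j / y j
    have hc0 : ∀ k j, 0 ≤ c k j := fun k j => by
      simp only [c]
      split_ifs
      · exact zero_le_one
      · exact div_nonneg (hg0 k j) (hynn j)
    have hcy : ∀ k j, c k j * y j = (g k).1 j := fun k j => by
      simp only [c]
      split_ifs with h
      · rw [hzero j h k, h, mul_zero]
      · exact div_mul_cancel₀ _ h
    have hcs : ∀ j, ∑ k, w k * c k j = 1 := fun j => by
      by_cases h : y j = 0
      · simp [c, h, hw1]
      · simp only [c, h, if_false, ← mul_div_assoc]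
        rw [← Finset.sum_div, hy1, div_self h]
    have key : ∑ k, w k • ((fun j => c k j • x j, (g k).2) :
        (Fin p → Fin m → ℝ) × (Fin n → ℝ)) = (x, z) := by
      apply Prod.ext
      · simp only [Prod.fst_sum, Prod.smul_mk]
        funext j
        simp only [Finset.sum_apply, Pi.smul_apply, smul_smul]
        rw [← Finset.sum_smul, hcs, one_smul]
      · simpa [Prod.snd_sum] using hz1
    rw [← key]
    refine (convex_convexHull ℝ _).sum_mem (fun k _ => (hw k).le) hw1 fun k _ =>
      subset_convexHull ℝ _ ⟨(hgG k).1, (g k).1, fun j => ⟨(hgG k).2 j, ?_⟩⟩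
    have h := hKsmul j _ (hc0 k j) _ (hK j)
    rw [smul_add, smul_smul, hcy, ← Matrix.mulVec_smul] at h
    exact h
end

section
/- Let f : {0,1}^n → ℝ_+ be a nonnegative function, K ⊆ ℝ^q a convex cone containing the origin, A ∈ ℝ^{q×m}, B ∈ ℝ^q. Define S̄(f,K) := {(x,z) ∈ ℝ^m × {0,1}^n : Ax + B f(z) ∈ K}. Then conv(S̄(f,K)) ⊆ Ŝ(f,K), and if moreover S̄(f,K) = S(f,K), then conv(S̄(f,K)) = Ŝ(f,K). -/
/-- Corollary 1: for a nonnegative `f : {0,1}^n → ℝ_+` and a convex cone `K` containing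
the origin, `conv(S̄(f,K)) ⊆ Ŝ(f,K)`, and if `S̄(f,K) = S(f,K)` then
`conv(S̄(f,K)) = Ŝ(f,K)`. -/
theorem conv_Sbar_subset_Shat (n m q : ℕ) (f : (Fin n → ℝ) → ℝ)
    (hf : ∀ z : Fin n → ℝ, (∀ i, z i = 0 ∨ z i = 1) → 0 ≤ f z)
    (K : Set (Fin q → ℝ)) (hK0 : (0 : Fin q → ℝ) ∈ K)
    (hKadd : ∀ a ∈ K, ∀ b ∈ K, a + b ∈ K)
    (hKsmul : ∀ c : ℝ, 0 ≤ c → ∀ a ∈ K, c • a ∈ K)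
    (A : Matrix (Fin q) (Fin m) ℝ) (B : Fin q → ℝ)
    (Sbar S Shat : Set ((Fin m → ℝ) × (Fin n → ℝ)))
    (Epi : Set (ℝ × (Fin n → ℝ)))
    (hSbar : Sbar = {w | (∀ i, w.2 i = 0 ∨ w.2 i = 1) ∧ A.mulVec w.1 + f w.2 • B ∈ K})
    (hS : S = {w | (∀ i, w.2 i = 0 ∨ w.2 i = 1) ∧
      ∃ y : ℝ, f w.2 ≤ y ∧ A.mulVec w.1 + y • B ∈ K})
    (hEpi : Epi = {yz | (∀ i, yz.2 i = 0 ∨ yz.2 i = 1) ∧ f yz.2 ≤ yz.1})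
    (hShat : Shat = {w | (∀ i, w.2 i ∈ Set.Icc (0:ℝ) 1) ∧ ∃ y : ℝ, 0 ≤ y ∧
      (y, w.2) ∈ convexHull ℝ Epi ∧ A.mulVec w.1 + y • B ∈ K}) :
    convexHull ℝ Sbar ⊆ Shat ∧ (Sbar = S → convexHull ℝ Sbar = Shat) := by
  have hsub : convexHull ℝ Sbar ⊆ Shat := by
    apply convexHull_min
    · rw [hSbar, hShat]
      rintro ⟨x, z⟩ ⟨hz, hk⟩
      refine ⟨fun i => ?_, f z, hf z hz, subset_convexHull ℝ _ ?_, hk⟩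
      · rcases hz i with h | h <;> simp only at h ⊢ <;> rw [h] <;> simp
      · rw [hEpi]
        exact ⟨hz, le_refl _⟩
    · rw [hShat]
      rintro ⟨x, z⟩ ⟨hz, y, hy, hm, hk⟩ ⟨x', z'⟩ ⟨hz', y', hy', hm', hk'⟩ a b ha hb hab
      refine ⟨fun i => ?_, a * y + b * y', by positivity, ?_, ?_⟩
      · exact (convex_Icc (0:ℝ) 1) (hz i) (hz' i) ha hb hab
      · exact (convex_convexHull ℝ Epi) hm hm' ha hb hab
      · have h := hKadd _ (hKsmul a ha _ hk) _ (hKsmul b hb _ hk')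
        convert h using 1
        simp only [Prod.smul_mk, Prod.mk_add_mk, Matrix.mulVec_add, Matrix.mulVec_smul]
        module
  refine ⟨hsub, fun hSS => hsub.antisymm ?_⟩
  rw [hSS, hShat]
  rintro ⟨x, z⟩ ⟨hz, y, hy, hm, hk⟩
  simp only at hm hk
  rcases hy.eq_or_lt with h0 | hpos
  · subst h0
    have key : convexHull ℝ Epi ⊆
        {p | 0 ≤ p.1 ∧ (p.1 = 0 → (x, p.2) ∈ convexHull ℝ S)} := by
      apply convexHull_min
      · rw [hEpi]
        rintro ⟨y', z'⟩ ⟨hz', hy'⟩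
        refine ⟨(hf z' hz').trans hy', fun h => subset_convexHull ℝ _ ?_⟩
        rw [hS]
        simp only at h hy'
        subst h
        exact ⟨hz', 0, hy', hk⟩
      · rintro ⟨y₁, z₁⟩ ⟨h1, h1'⟩ ⟨y₂, z₂⟩ ⟨h2, h2'⟩ a b ha hb hab
        simp only at h1 h1' h2 h2'
        refine ⟨add_nonneg (mul_nonneg ha h1) (mul_nonneg hb h2), fun h => ?_⟩
        have h : a * y₁ + b * y₂ = 0 := h
        have e1 : a * y₁ = 0 := by nlinarith [mul_nonneg ha h1, mul_nonneg hb h2]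
        have e2 : b * y₂ = 0 := by nlinarith [mul_nonneg ha h1, mul_nonneg hb h2]
        rcases mul_eq_zero.1 e1 with e | e
        · have hb1 : b = 1 := by linarith
          subst e hb1
          have : y₂ = 0 := by linarith
          simpa using h2' this
        rcases mul_eq_zero.1 e2 with e' | e'
        · have ha1 : a = 1 := by linarith
          subst e' ha1
          simpa using h1' e
        have := (convex_convexHull ℝ S) (h1' e) (h2' e') ha hb hab
        convert this using 1
        simp only [Prod.smul_mk, Prod.mk_add_mk, ← add_smul, hab, one_smul]
    exact (key hm).2 rfl
  · have key : convexHull ℝ Epi ⊆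
        {p | ((p.1 / y) • x, p.2) ∈ convexHull ℝ S} := by
      apply convexHull_min
      · rw [hEpi]
        rintro ⟨y', z'⟩ ⟨hz', hy'⟩
        apply subset_convexHull ℝ _
        rw [hS]
        refine ⟨hz', y', hy', ?_⟩
        have h := hKsmul (y' / y) (div_nonneg ((hf z' hz').trans hy') hy) _ hk
        convert h using 1
        simp only [Matrix.mulVec_smul, smul_add, smul_smul]
        rw [div_mul_cancel₀ _ hpos.ne']
      · rintro ⟨y₁, z₁⟩ h1 ⟨y₂, z₂⟩ h2 a b ha hb hab
        have := (convex_convexHull ℝ S) h1 h2 ha hb hab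
        simp only [Set.mem_setOf_eq]
        convert this using 1
        simp only [Prod.smul_mk, Prod.mk_add_mk, smul_eq_mul]
        congr 1
        module
    have h := key hm
    simpa [div_self hpos.ne'] using h
end

section
/- For each j ∈ [p], let f_j : {0,1}^n → ℝ_+ be a nonnegative function and K_j ⊆ ℝ^{q_j} a convex cone containing the origin. Define S̄({f_j},{K_j}) := {(x,z) ∈ ℝ^{mp} × {0,1}^n : A^j x^j + B^j f_j(z) ∈ K_j for all j ∈ [p]}. Then conv(S̄({f_j},{K_j})) ⊆ Ŝ({f_j},{K_j}), and if moreover S̄({f_j},{K_j}) = S({f_j},{K_j}), then conv(S̄({f_j},{K_j})) = Ŝ({f_j},{K_j}). -/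
/-- Corollary 2: for nonnegative functions `f_j` and convex cones `K_j` containing the
origin, `conv(S̄({f_j},{K_j})) ⊆ Ŝ({f_j},{K_j})`, with equality whenever
`S̄({f_j},{K_j}) = S({f_j},{K_j})`. -/
theorem conv_Sbar_multi_subset_Shat (p n m : ℕ) (q : Fin p → ℕ)
    (f : Fin p → (Fin n → ℝ) → ℝ)
    (hf : ∀ j, ∀ z : Fin n → ℝ, (∀ i, z i = 0 ∨ z i = 1) → 0 ≤ f j z)
    (K : ∀ j, Set (Fin (q j) → ℝ))
    (hK0 : ∀ j, (0 : Fin (q j) → ℝ) ∈ K j)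
    (hKadd : ∀ j, ∀ a ∈ K j, ∀ b ∈ K j, a + b ∈ K j)
    (hKsmul : ∀ j, ∀ c : ℝ, 0 ≤ c → ∀ a ∈ K j, c • a ∈ K j)
    (A : ∀ j, Matrix (Fin (q j)) (Fin m) ℝ) (B : ∀ j, Fin (q j) → ℝ)
    (Sbar S Shat : Set ((Fin p → Fin m → ℝ) × (Fin n → ℝ)))
    (G : Set ((Fin p → ℝ) × (Fin n → ℝ)))
    (hSbar : Sbar = {w | (∀ i, w.2 i = 0 ∨ w.2 i = 1) ∧
      ∀ j, (A j).mulVec (w.1 j) + f j w.2 • B j ∈ K j})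
    (hS : S = {w | (∀ i, w.2 i = 0 ∨ w.2 i = 1) ∧ ∃ y : Fin p → ℝ,
      ∀ j, f j w.2 ≤ y j ∧ (A j).mulVec (w.1 j) + y j • B j ∈ K j})
    (hG : G = {yz | (∀ i, yz.2 i = 0 ∨ yz.2 i = 1) ∧ ∀ j, f j yz.2 ≤ yz.1 j})
    (hShat : Shat = {w | (∀ i, w.2 i ∈ Set.Icc (0:ℝ) 1) ∧ ∃ y : Fin p → ℝ,
      (y, w.2) ∈ convexHull ℝ G ∧
      ∀ j, (A j).mulVec (w.1 j) + y j • B j ∈ K j}) :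
    convexHull ℝ Sbar ⊆ Shat ∧ (Sbar = S → convexHull ℝ Sbar = Shat) := by
  have key : convexHull ℝ Sbar ⊆ Shat := by
    apply convexHull_min
    · intro w hw
      rw [hSbar] at hw
      rw [hShat]
      obtain ⟨h1, h2⟩ := hw
      refine ⟨fun i => ?_, fun j => f j w.2, subset_convexHull ℝ G ?_, h2⟩
      · rcases h1 i with h | h <;> rw [h] <;> simp
      · rw [hG]
        exact ⟨h1, fun j => le_refl _⟩
    · rw [hShat]
      rintro u ⟨hu1, y, hy, hu2⟩ v ⟨hv1, y', hy', hv2⟩ a b ha hb hab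
      refine ⟨fun i => (convex_Icc (0:ℝ) 1) (hu1 i) (hv1 i) ha hb hab, a • y + b • y',
        (convex_convexHull ℝ G) hy hy' ha hb hab, fun j => ?_⟩
      have := hKadd j _ (hKsmul j a ha _ (hu2 j)) _ (hKsmul j b hb _ (hv2 j))
      convert this using 1
      simp only [Prod.fst_add, Prod.smul_fst, Pi.add_apply, Pi.smul_apply, Matrix.mulVec_add,
        Matrix.mulVec_smul, smul_eq_mul]
      module
  refine ⟨key, fun hSS => key.antisymm ?_⟩
  rw [hSS, hShat]
  rintro ⟨x, z⟩ ⟨-, y, hy, hK⟩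
  obtain ⟨ι, _, P, w, hP, -, hw, hw1, hsum⟩ := eq_pos_convex_span_of_mem_convexHull hy
  have hPG : ∀ k, (∀ i, (P k).2 i = 0 ∨ (P k).2 i = 1) ∧ ∀ j, f j (P k).2 ≤ (P k).1 j := by
    intro k
    have := hP (Set.mem_range_self k)
    rw [hG] at this
    exact this
  have hnn : ∀ k j, 0 ≤ (P k).1 j := fun k j =>
    (hf j _ (hPG k).1).trans ((hPG k).2 j)
  have hy1 : ∀ j, ∑ k, w k * (P k).1 j = y j := by
    intro j
    have := congrArg (fun t => t.1 j) hsum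
    simpa [Prod.fst_sum, Finset.sum_apply] using this
  have hz1 : ∑ k, w k • (P k).2 = z := by
    have := congrArg (fun t => t.2) hsum
    simpa [Prod.snd_sum] using this
  have hynn : ∀ j, 0 ≤ y j := fun j => by
    rw [← hy1 j]
    exact Finset.sum_nonneg fun k _ => mul_nonneg (hw k).le (hnn k j)
  have hzero : ∀ j, y j = 0 → ∀ k, (P k).1 j = 0 := by
    intro j hj k
    have h := hy1 j
    rw [hj, Finset.sum_eq_zero_iff_of_nonneg
      (fun k _ => mul_nonneg (hw k).le (hnn k j))] at h
    exact (mul_eq_zero.mp (h k (Finset.mem_univ k))).resolve_left (hw k).ne'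
  let c : ι → Fin p → ℝ := fun k j => if y j = 0 then 1 else (P k).1 j / y j
  have hc : ∀ j, ∑ k, w k * c k j = 1 := by
    intro j
    by_cases hj : y j = 0
    · simp [c, hj, hw1]
    · simp only [c, hj, if_false]
      simp_rw [← mul_div_assoc]
      rw [← Finset.sum_div, hy1, div_self hj]
  have hcn : ∀ k j, 0 ≤ c k j := by
    intro k j
    simp only [c]
    split_ifs
    · exact zero_le_one
    · exact div_nonneg (hnn k j) (hynn j)
  have hcy : ∀ k j, c k j * y j = (P k).1 j := by
    intro k j
    by_cases hj : y j = 0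
    · rw [hzero j hj k, hj, mul_zero]
    · simp only [c, hj, if_false]
      exact div_mul_cancel₀ _ hj
  have hrep : ∑ k, w k • ((fun j => c k j • x j, (P k).2) :
      (Fin p → Fin m → ℝ) × (Fin n → ℝ)) = (x, z) := by
    refine Prod.ext ?_ ?_
    · rw [Prod.fst_sum]
      funext j
      simp only [Finset.sum_apply, Prod.smul_fst, Pi.smul_apply, smul_smul]
      rw [← Finset.sum_smul, hc, one_smul]
    · rw [Prod.snd_sum]
      exact hz1
  rw [← hrep]
  refine (convex_convexHull ℝ S).sum_mem (fun k _ => (hw k).le) hw1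
    (fun k _ => subset_convexHull ℝ S ?_)
  rw [hS]
  refine ⟨(hPG k).1, (P k).1, fun j => ⟨(hPG k).2 j, ?_⟩⟩
  have := hKsmul j _ (hcn k j) _ (hK j)
  rwa [smul_add, smul_smul, hcy, ← Matrix.mulVec_smul] at this
end

section
/- Let f : {0,1}^n → ℝ be submodular, i.e., f(S₁) + f(S₂) ≥ f(S₁∪S₂) + f(S₁∩S₂) for all S₁, S₂ ⊆ [n] (identifying subsets with their characteristic vectors). Then conv(Epi(f)) = {(y,z) ∈ ℝ × [0,1]^n : y − f(∅) ≥ π^⊤ z for all π ∈ P_{f̃}}, where f̃ := f − f(∅) and P_{f̃} := {π ∈ ℝ^n : Σ_{i∈V} π_i ≤ f(V) − f(∅) for all V ⊆ [n]}. -/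
theorem greedy_aux (n : ℕ) (f : Finset (Fin n) → ℝ)
    (hsub : ∀ S₁ S₂ : Finset (Fin n), f (S₁ ∪ S₂) + f (S₁ ∩ S₂) ≤ f S₁ + f S₂)
    (z : Fin n → ℝ) (hz : ∀ i, z i ≤ 1) (s : Finset (Fin n)) :
    ∃ π : Fin n → ℝ, (∀ V ⊆ s, ∑ i ∈ V, π i ≤ f V - f ∅) ∧ ∑ i ∈ s, π i = f s - f ∅ ∧
      ∀ m : ℝ, m ≤ 1 → (∀ i ∈ s, m ≤ z i) →
        ∃ w : Finset (Fin n) → ℝ, (∀ V, 0 ≤ w V) ∧ ∑ V, w V = 1 - m ∧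
          ∑ V, w V * f V = ∑ i ∈ s, π i * (z i - m) + (1 - m) * f ∅ ∧
          ∀ i, ∑ V, w V * (if i ∈ V then (1:ℝ) else 0) = if i ∈ s then z i - m else 0 := by
  induction s using Finset.induction_on_min_value z with
  | empty =>
    refine ⟨0, ?_, by simp, ?_⟩
    · intro V hV
      rw [Finset.subset_empty.1 hV]
      simp
    · intro m hm _
      refine ⟨fun V => if V = ∅ then 1 - m else 0, ?_, ?_, ?_, ?_⟩
      · intro V
        dsimp only
        split_ifs <;> linarith
      · simp
      · simp
      · intro i
        simp only [ite_mul, zero_mul]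
        simp
  | insert a s ha hmin ih =>
    obtain ⟨π, h1, h2, h3⟩ := ih
    have hcongr : ∀ (V : Finset (Fin n)) (g : Fin n → ℝ), a ∉ V →
        ∑ i ∈ V, Function.update π a (f (insert a s) - f s) i * g i = ∑ i ∈ V, π i * g i := by
      intro V g hV
      refine Finset.sum_congr rfl fun i hi => ?_
      rw [Function.update_of_ne]
      rintro rfl
      exact hV hi
    have hcongr1 : ∀ (V : Finset (Fin n)), a ∉ V →
        ∑ i ∈ V, Function.update π a (f (insert a s) - f s) i = ∑ i ∈ V, π i := by
      intro V hV
      simpa using hcongr V (fun _ => 1) hV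
    refine ⟨Function.update π a (f (insert a s) - f s), ?_, ?_, ?_⟩
    · intro V hV
      by_cases haV : a ∈ V
      · rw [← Finset.add_sum_erase V _ haV, hcongr1 _ (Finset.notMem_erase a V),
          Function.update_self]
        have hsubs : V.erase a ⊆ s := by
          grind
        have e1 := h1 _ hsubs
        have e2 := hsub V s
        have e3 : V ∪ s = insert a s := by grind
        have e4 : V ∩ s = V.erase a := by grind
        rw [e3, e4] at e2
        linarith
      · rw [hcongr1 V haV]
        exact h1 V (by grind)
    · rw [Finset.sum_insert ha, hcongr1 s ha, Function.update_self, h2]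
      ring
    · intro m hm hms
      obtain ⟨w, w0, w1, w2, w3⟩ := h3 (z a) (hz a) hmin
      have hma : m ≤ z a := hms a (by simp)
      refine ⟨fun V => w V + if V = insert a s then z a - m else 0, ?_, ?_, ?_, ?_⟩
      · intro V
        have := w0 V
        dsimp only
        split_ifs <;> linarith
      · rw [Finset.sum_add_distrib, w1]
        simp
      · simp only [add_mul, Finset.sum_add_distrib, w2, ite_mul, zero_mul]
        rw [Finset.sum_insert ha, hcongr s _ ha, Function.update_self]
        simp only [Finset.sum_ite_eq', Finset.mem_univ, if_true]
        simp only [mul_sub, Finset.sum_sub_distrib, ← Finset.sum_mul, h2]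
        ring
      · intro i
        simp only [add_mul, Finset.sum_add_distrib, w3, ite_mul, zero_mul]
        simp only [Finset.sum_ite_eq', Finset.mem_univ, if_true]
        by_cases hia : i = a
        · subst hia
          simp [ha]
        · by_cases his : i ∈ s <;> simp [his, hia]

/-- Theorem (Lovász; Atamtürk–Narayanan): for a submodular `f : {0,1}^n → ℝ`,
`conv(Epi(f)) = {(y,z) ∈ ℝ × [0,1]^n : y − f(∅) ≥ π᷀ᵀ z for all π ∈ P_{f̃}}`,
where `f̃ = f − f(∅)`. Binary vectors are identified with subsets of `[n]`. -/
theorem conv_epi_submodular (n : ℕ) (f : Finset (Fin n) → ℝ)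
    (hsub : ∀ S₁ S₂ : Finset (Fin n), f (S₁ ∪ S₂) + f (S₁ ∩ S₂) ≤ f S₁ + f S₂) :
    convexHull ℝ {yz : ℝ × (Fin n → ℝ) |
      ∃ V : Finset (Fin n), (∀ i, yz.2 i = if i ∈ V then (1:ℝ) else 0) ∧ f V ≤ yz.1}
    = {yz : ℝ × (Fin n → ℝ) | (∀ i, yz.2 i ∈ Set.Icc (0:ℝ) 1) ∧
        ∀ π : Fin n → ℝ, (∀ V : Finset (Fin n), ∑ i ∈ V, π i ≤ f V - f ∅) →
          ∑ i, π i * yz.2 i ≤ yz.1 - f ∅} := by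
  apply Set.Subset.antisymm
  · apply convexHull_min
    · rintro ⟨y, z⟩ ⟨V, hV, hy⟩
      simp only at hV hy
      refine ⟨fun i => ?_, fun π hπ => ?_⟩
      · simp only [hV]
        split_ifs <;> simp
      · have := hπ V
        simp only [hV, mul_ite, mul_one, mul_zero, Finset.sum_ite_mem, Finset.univ_inter]
        linarith
    · rintro ⟨y, z⟩ ⟨h1, h2⟩ ⟨y', z'⟩ ⟨h1', h2'⟩ a b ha hb hab
      refine ⟨fun i => (convex_Icc (0:ℝ) 1) (h1 i) (h1' i) ha hb hab, fun π hπ => ?_⟩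
      have e1 := mul_le_mul_of_nonneg_left (h2 π hπ) ha
      have e2 := mul_le_mul_of_nonneg_left (h2' π hπ) hb
      have e3 : ∑ i, π i * (a * z i + b * z' i)
          = a * ∑ i, π i * z i + b * ∑ i, π i * z' i := by
        rw [Finset.mul_sum, Finset.mul_sum, ← Finset.sum_add_distrib]
        exact Finset.sum_congr rfl fun i _ => by ring
      have e4 : b = 1 - a := by linarith
      simp only [Prod.smul_mk, Prod.mk_add_mk, Pi.add_apply, Pi.smul_apply, smul_eq_mul]
      rw [e3]
      simp only at e1 e2
      subst e4
      linarith
  · rintro ⟨y, z⟩ ⟨hz, hy⟩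
    simp only at hz hy
    obtain ⟨π, h1, -, h3⟩ := greedy_aux n f hsub z (fun i => (hz i).2) Finset.univ
    obtain ⟨w, w0, w1, w2, w3⟩ := h3 0 zero_le_one (fun i _ => (hz i).1)
    have hle := hy π (fun V => h1 V (Finset.subset_univ V))
    simp only [sub_zero, one_mul, Finset.mem_univ, if_true] at w1 w2 w3
    have hmem := (convex_convexHull ℝ {yz : ℝ × (Fin n → ℝ) |
      ∃ V : Finset (Fin n), (∀ i, yz.2 i = if i ∈ V then (1:ℝ) else 0) ∧ f V ≤ yz.1}).sum_mem
      (t := Finset.univ) (w := w)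
      (z := fun V => (f V + (y - ∑ V, w V * f V), fun i => if i ∈ V then (1:ℝ) else 0))
      (fun V _ => w0 V) w1
      (fun V _ => subset_convexHull ℝ _ ⟨V, fun i => rfl, by
        simp only
        linarith⟩)
    convert hmem using 1
    ext i
    · simp only [Prod.fst_sum, Prod.smul_mk, smul_eq_mul, mul_add, Finset.sum_add_distrib,
        ← Finset.sum_mul, w1]
      ring
    · simp only [Prod.snd_sum, Prod.smul_mk, Finset.sum_apply, Pi.smul_apply, smul_eq_mul, w3]
end

section
/- Let f : {0,1}^n → ℝ be submodular and f̃ := f − f(∅). Then π ∈ ℝ^n is an extreme point of the extended polymatroid P_{f̃} := {π ∈ ℝ^n : Σ_{i∈V} π_i ≤ f(V) − f(∅) for all V ⊆ [n]} if and only if there exists a permutation σ of [n] such that π_{σ(t)} = f(V_t) − f(V_{t−1}) for all t ∈ [n], where V_t := {σ(1),…,σ(t)} and V_0 := ∅. -/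
def EPoly {n : ℕ} (f : Finset (Fin n) → ℝ) : Set (Fin n → ℝ) :=
  {π' : Fin n → ℝ | ∀ V : Finset (Fin n), ∑ i ∈ V, π' i ≤ f V - f ∅}

def ETight {n : ℕ} (f : Finset (Fin n) → ℝ) (π : Fin n → ℝ) (V : Finset (Fin n)) : Prop :=
  ∑ i ∈ V, π i = f V - f ∅

lemma perturb {n : ℕ} (f : Finset (Fin n) → ℝ) (π : Fin n → ℝ)
    (h : π ∈ Set.extremePoints ℝ (EPoly f)) (d : Fin n → ℝ)
    (hd : ∀ V, ETight f π V → ∑ i ∈ V, d i = 0) : d = 0 := by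
  rw [mem_extremePoints] at h
  obtain ⟨hP, hE⟩ := h
  have hev : ∀ᶠ ε : ℝ in nhdsWithin 0 (Set.Ioi 0), ∀ V : Finset (Fin n),
      ε * |∑ i ∈ V, d i| ≤ f V - f ∅ - ∑ i ∈ V, π i := by
    rw [Filter.eventually_all]
    intro V
    by_cases hV : ETight f π V
    · refine Filter.Eventually.of_forall fun ε => ?_
      rw [hd V hV]
      have := hP V
      simp
      linarith
    · have hlt : ∑ i ∈ V, π i < f V - f ∅ := lt_of_le_of_ne (hP V) hV
      have ht : Filter.Tendsto (fun ε : ℝ => ε * |∑ i ∈ V, d i|) (nhdsWithin 0 (Set.Ioi 0))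
          (nhds (0 * |∑ i ∈ V, d i|)) :=
        ((continuous_id.mul continuous_const).tendsto 0).mono_left nhdsWithin_le_nhds
      rw [zero_mul] at ht
      filter_upwards [ht.eventually_lt_const (sub_pos.2 hlt)] with ε hε using hε.le
  obtain ⟨ε, hε, hpos⟩ := (hev.and self_mem_nhdsWithin).exists
  have hpos' : 0 < ε := hpos
  have h1 : π + ε • d ∈ EPoly f := by
    intro V
    have h2 := hε V
    have h3 := mul_le_mul_of_nonneg_left (le_abs_self (∑ i ∈ V, d i)) hpos'.le
    simp only [Pi.add_apply, Pi.smul_apply, smul_eq_mul, Finset.sum_add_distrib, ← Finset.mul_sum]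
    linarith
  have h2 : π - ε • d ∈ EPoly f := by
    intro V
    have h2 := hε V
    have h3 := mul_le_mul_of_nonneg_left (neg_abs_le (∑ i ∈ V, d i)) hpos'.le
    simp only [Pi.sub_apply, Pi.smul_apply, smul_eq_mul, Finset.sum_sub_distrib, ← Finset.mul_sum]
    linarith
  have h3 := (hE _ h1 _ h2 ⟨1/2, 1/2, by norm_num, by norm_num, by norm_num, by
    ext i; simp; ring⟩).1
  ext i
  have h4 := congrFun h3 i
  simp at h4
  rcases h4 with h4 | h4
  · exact absurd h4 hpos'.ne'
  · exact h4

lemma tight_lattice {n : ℕ} (f : Finset (Fin n) → ℝ)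
    (hsub : ∀ S₁ S₂ : Finset (Fin n), f (S₁ ∪ S₂) + f (S₁ ∩ S₂) ≤ f S₁ + f S₂)
    (π : Fin n → ℝ) (hP : π ∈ EPoly f) (A B : Finset (Fin n))
    (hA : ETight f π A) (hB : ETight f π B) : ETight f π (A ∪ B) ∧ ETight f π (A ∩ B) := by
  have h1 := hP (A ∪ B)
  have h2 := hP (A ∩ B)
  have h3 := hsub A B
  have h4 := Finset.sum_union_inter (s₁ := A) (s₂ := B) (f := π)
  unfold ETight at *
  constructor <;> linarith

lemma tight_step {n : ℕ} (f : Finset (Fin n) → ℝ)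
    (hsub : ∀ S₁ S₂ : Finset (Fin n), f (S₁ ∪ S₂) + f (S₁ ∩ S₂) ≤ f S₁ + f S₂)
    (π : Fin n → ℝ) (h : π ∈ Set.extremePoints ℝ (EPoly f)) (A : Finset (Fin n))
    (hA : ETight f π A) (hne : A ≠ Finset.univ) :
    ∃ x, x ∉ A ∧ ETight f π (insert x A) := by
  classical
  have hP : π ∈ EPoly f := h.1
  have hL := tight_lattice f hsub π hP
  obtain ⟨a, ha⟩ : ∃ a, a ∉ A := by
    by_contra hc
    push Not at hc
    exact hne (Finset.eq_univ_iff_forall.2 hc)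
  have hcov : ∃ C, ETight f π C ∧ a ∈ C := by
    by_contra hc
    push Not at hc
    have := perturb f π h (Pi.single a 1) (fun V hV => by
      simp [Finset.sum_pi_single, hc V hV])
    have h5 := congrFun this a
    simp at h5
  have hsep : ∀ i j : Fin n, i ≠ j → ∃ C, ETight f π C ∧ ¬ (i ∈ C ↔ j ∈ C) := by
    intro i j hij
    by_contra hc
    push Not at hc
    have := perturb f π h (Pi.single i 1 - Pi.single j 1) (fun V hV => by
      have := hc V hV
      simp only [Pi.sub_apply, Finset.sum_sub_distrib, Finset.sum_pi_single']
      by_cases hi : i ∈ V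
      · simp [hi, this.1 hi]
      · simp [hi, mt this.2 hi])
    have h5 := congrFun this i
    simp [hij] at h5
  obtain ⟨C, hC, haC⟩ := hcov
  let S : Finset (Finset (Fin n)) := Finset.univ.filter (fun B => ETight f π B ∧ A ⊂ B)
  have hS : S.Nonempty := ⟨A ∪ C, by
    simp only [S, Finset.mem_filter, Finset.mem_univ, true_and]
    refine ⟨(hL A C hA hC).1, ?_⟩
    rw [Finset.ssubset_iff_of_subset Finset.subset_union_left]
    exact ⟨a, by simp [haC], ha⟩⟩
  obtain ⟨B, hB, hmin⟩ := S.exists_min_image Finset.card hS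
  simp only [S, Finset.mem_filter, Finset.mem_univ, true_and] at hB hmin
  obtain ⟨hBt, hAB⟩ := hB
  obtain ⟨x, hxB, hxA⟩ := Finset.exists_of_ssubset hAB
  have key : ∀ i j : Fin n, ∀ C, ETight f π C → i ∈ B → i ∉ A → j ∈ B → j ∉ A → i ∈ C → j ∉ C →
      False := by
    intro i j C hC hiB hiA hjB hjA hiC hjC
    have ht : ETight f π (A ∪ (B ∩ C)) := (hL _ _ hA (hL _ _ hBt hC).2).1
    have hss : A ⊂ A ∪ (B ∩ C) := by
      rw [Finset.ssubset_iff_of_subset Finset.subset_union_left]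
      exact ⟨i, by simp [hiB, hiC], hiA⟩
    have h6 := hmin _ ⟨ht, hss⟩
    have h7 : A ∪ (B ∩ C) ⊂ B := by
      rw [Finset.ssubset_iff_of_subset
        (Finset.union_subset hAB.1 Finset.inter_subset_left)]
      exact ⟨j, hjB, by simp [hjA, hjC]⟩
    have := Finset.card_lt_card h7
    omega
  have hBx : B = insert x A := by
    ext y
    constructor
    · intro hy
      by_contra hyn
      simp only [Finset.mem_insert, not_or] at hyn
      obtain ⟨C, hC, hCn⟩ := hsep x y (Ne.symm hyn.1)
      by_cases hx : x ∈ C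
      · exact key x y C hC hxB hxA hy hyn.2 hx (by tauto)
      · exact key y x C hC hy hyn.2 hxB hxA (by tauto) hx
    · intro hy
      rcases Finset.mem_insert.1 hy with rfl | hy
      · exact hxB
      · exact hAB.1 hy
  exact ⟨x, hxA, hBx ▸ hBt⟩

lemma exists_perm_of_extreme {n : ℕ} (f : Finset (Fin n) → ℝ)
    (hsub : ∀ S₁ S₂ : Finset (Fin n), f (S₁ ∪ S₂) + f (S₁ ∩ S₂) ≤ f S₁ + f S₂)
    (π : Fin n → ℝ) (h : π ∈ Set.extremePoints ℝ (EPoly f)) :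
    ∃ σ : Equiv.Perm (Fin n), ∀ t : Fin n,
        π (σ t) = f ((Finset.univ.filter (fun s : Fin n => s ≤ t)).image σ)
                  - f ((Finset.univ.filter (fun s : Fin n => s < t)).image σ) := by
  classical
  rcases Nat.eq_zero_or_pos n with h0 | hn
  · subst h0
    exact ⟨1, fun t => t.elim0⟩
  haveI : Nonempty (Fin n) := ⟨⟨0, hn⟩⟩
  have hst := tight_step f hsub π h
  choose! x hxA hxT using hst
  let A : ℕ → Finset (Fin n) := fun k => Nat.rec ∅ (fun _ B => insert (x B) B) k
  have hA0 : A 0 = ∅ := rfl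
  have hAs : ∀ k, A (k+1) = insert (x (A k)) (A k) := fun _ => rfl
  have hAim : ∀ k, A k = (Finset.range k).image (fun i => x (A i)) := by
    intro k
    induction k with
    | zero => simp [hA0]
    | succ k ih => rw [hAs, Finset.range_add_one, Finset.image_insert, ← ih]
  have hcardle : ∀ k, (A k).card ≤ k := by
    intro k
    rw [hAim]
    simpa using Finset.card_image_le (s := Finset.range k) (f := fun i => x (A i))
  have hneu : ∀ k, k < n → A k ≠ Finset.univ := by
    intro k hk he
    have := hcardle k
    rw [he] at this
    simp at this
    omega
  have hT : ∀ k, k ≤ n → ETight f π (A k) := by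
    intro k
    induction k with
    | zero => intro _; simp [hA0, ETight]
    | succ k ih =>
      intro hk
      rw [hAs]
      exact hxT _ (ih (by omega)) (hneu k (by omega))
  have hnot : ∀ k, k < n → x (A k) ∉ A k := fun k hk => hxA _ (hT k hk.le) (hneu k hk)
  have hlt : ∀ s t, s < t → x (A s) ∈ A t := by
    intro s t hs
    rw [hAim t]
    exact Finset.mem_image.2 ⟨s, by simpa using hs, rfl⟩
  have hinj : Function.Injective (fun t : Fin n => x (A t)) := by
    intro s t hs
    simp only at hs
    rcases lt_trichotomy s t with hl | hl | hl
    · exact absurd (hs ▸ hlt s t hl) (hnot t t.2)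
    · exact hl
    · exact absurd (hs ▸ hlt t s hl) (hnot s s.2)
  have hbij := Finite.injective_iff_bijective.1 hinj
  refine ⟨Equiv.ofBijective _ hbij, fun t => ?_⟩
  have e1 : (Finset.univ.filter (fun s : Fin n => s < t)).image (Equiv.ofBijective _ hbij)
      = A t := by
    rw [hAim t]
    ext y
    simp only [Finset.mem_image, Finset.mem_filter, Finset.mem_univ, true_and,
      Equiv.ofBijective_apply, Finset.mem_range]
    constructor
    · rintro ⟨s, hs, rfl⟩
      exact ⟨s, hs, rfl⟩
    · rintro ⟨s, hs, rfl⟩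
      exact ⟨⟨s, hs.trans t.2⟩, hs, rfl⟩
  have e2 : (Finset.univ.filter (fun s : Fin n => s ≤ t)).image (Equiv.ofBijective _ hbij)
      = A (t + 1) := by
    rw [hAim (t+1)]
    ext y
    simp only [Finset.mem_image, Finset.mem_filter, Finset.mem_univ, true_and,
      Equiv.ofBijective_apply, Finset.mem_range]
    constructor
    · rintro ⟨s, hs, rfl⟩
      exact ⟨s, Nat.lt_succ_of_le hs, rfl⟩
    · rintro ⟨s, hs, rfl⟩
      exact ⟨⟨s, by omega⟩, Nat.le_of_lt_succ hs, rfl⟩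
  rw [e1, e2, Equiv.ofBijective_apply]
  have t1 := hT t t.2.le
  have t2 := hT (t+1) t.2
  unfold ETight at t1 t2
  rw [hAs, Finset.sum_insert (hnot t t.2), ← hAs] at t2
  linarith

lemma extreme_of_perm {n : ℕ} (f : Finset (Fin n) → ℝ)
    (hsub : ∀ S₁ S₂ : Finset (Fin n), f (S₁ ∪ S₂) + f (S₁ ∩ S₂) ≤ f S₁ + f S₂)
    (π : Fin n → ℝ) (σ : Equiv.Perm (Fin n)) (hσ : ∀ t : Fin n,
        π (σ t) = f ((Finset.univ.filter (fun s : Fin n => s ≤ t)).image σ)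
                  - f ((Finset.univ.filter (fun s : Fin n => s < t)).image σ)) :
    π ∈ Set.extremePoints ℝ (EPoly f) := by
  classical
  let A : ℕ → Finset (Fin n) := fun k => (Finset.univ.filter (fun s : Fin n => s.val < k)).image σ
  have hmem : ∀ k (s : Fin n), σ s ∈ A k ↔ s.val < k := by
    intro k s
    simp [A]
  have hA0 : A 0 = ∅ := by simp [A]
  have hAn : A n = Finset.univ := by
    ext y
    obtain ⟨s, rfl⟩ := σ.surjective y
    simp [hmem]
  have hAs : ∀ t : Fin n, A (t + 1) = insert (σ t) (A t) := by
    intro t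
    ext y
    obtain ⟨s, rfl⟩ := σ.surjective y
    simp only [Finset.mem_insert, hmem, σ.injective.eq_iff, Fin.ext_iff]
    omega
  have hnot : ∀ t : Fin n, σ t ∉ A t := by
    intro t
    simp [hmem]
  have hπ : ∀ t : Fin n, π (σ t) = f (A (t+1)) - f (A t) := by
    intro t
    rw [hσ t]
    congr 2
    ext y
    obtain ⟨s, rfl⟩ := σ.surjective y
    rw [hmem]
    simp only [Finset.mem_image, Finset.mem_filter, Finset.mem_univ, true_and,
      EmbeddingLike.apply_eq_iff_eq, exists_eq_right, Fin.le_def]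
    omega
  have hT : ∀ k, k ≤ n → ETight f π (A k) := by
    intro k
    induction k with
    | zero => intro _; simp [hA0, ETight]
    | succ k ih =>
      intro hk
      have h1 := ih (by omega)
      have h2 := hπ ⟨k, hk⟩
      have h3 := hAs ⟨k, hk⟩
      have h4 := hnot ⟨k, hk⟩
      simp only at h2 h3 h4
      unfold ETight at *
      nth_rw 1 [h3]
      rw [Finset.sum_insert h4]
      linarith
  have hP : π ∈ EPoly f := by
    intro V
    have hk : ∀ k, k ≤ n → ∑ i ∈ V ∩ A k, π i ≤ f (V ∩ A k) - f ∅ := by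
      intro k
      induction k with
      | zero => intro _; simp [hA0]
      | succ k ih =>
        intro hk
        have h1 := ih (by omega)
        have h2 := hπ ⟨k, hk⟩
        have h3 := hAs ⟨k, hk⟩
        have h4 := hnot ⟨k, hk⟩
        simp only at h2 h3 h4
        by_cases hv : σ ⟨k, hk⟩ ∈ V
        · have h5 := hsub (V ∩ A (k+1)) (A k)
          have e1 : V ∩ A (k+1) ∪ A k = A (k+1) := by
            rw [h3]; ext y; simp only [Finset.mem_union, Finset.mem_inter, Finset.mem_insert]
            grind
          have e2 : V ∩ A (k+1) ∩ A k = V ∩ A k := by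
            rw [h3]; ext y; simp only [Finset.mem_inter, Finset.mem_insert]
            tauto
          rw [e1, e2] at h5
          have e3 : V ∩ A (k+1) = insert (σ ⟨k, hk⟩) (V ∩ A k) := by
            rw [h3, Finset.inter_insert_of_mem hv]
          have e4 : ∑ i ∈ V ∩ A (k+1), π i = π (σ ⟨k, hk⟩) + ∑ i ∈ V ∩ A k, π i := by
            rw [e3, Finset.sum_insert (by simp [h4])]
          linarith
        · rw [h3, Finset.inter_insert_of_notMem hv]
          exact h1
    have := hk n le_rfl
    rwa [hAn, Finset.inter_univ] at this
  rw [mem_extremePoints_iff_left]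
  refine ⟨hP, ?_⟩
  rintro x hx y hy ⟨a, b, ha, hb, hab, hxy⟩
  have hsum : ∀ k, k ≤ n → ∑ i ∈ A k, x i = ∑ i ∈ A k, π i := by
    intro k hk
    have h1 : ∑ i ∈ A k, π i = a * ∑ i ∈ A k, x i + b * ∑ i ∈ A k, y i := by
      rw [← hxy]
      simp [Finset.sum_add_distrib, Finset.mul_sum]
    have h2 : ∑ i ∈ A k, π i = f (A k) - f ∅ := hT k hk
    have h3 := hx (A k)
    have h4 := hy (A k)
    rw [← h2] at h3 h4
    refine le_antisymm h3 ?_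
    have h5 := mul_le_mul_of_nonneg_left h4 hb.le
    have h6 : a * ∑ i ∈ A k, π i ≤ a * ∑ i ∈ A k, x i := by
      have : a * ∑ i ∈ A k, π i + b * ∑ i ∈ A k, π i = ∑ i ∈ A k, π i := by
        rw [← add_mul, hab, one_mul]
      linarith
    exact le_of_mul_le_mul_left h6 ha
  ext y
  obtain ⟨t, rfl⟩ := σ.surjective y
  have h1 := hsum t t.2.le
  have h2 := hsum (t+1) t.2
  rw [hAs, Finset.sum_insert (hnot t), Finset.sum_insert (hnot t)] at h2
  linarith

/-- Theorem (Edmonds): for a submodular `f`, a point `π` is an extreme point of the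
extended polymatroid `P_{f̃} = {π : Σ_{i∈V} π_i ≤ f(V) − f(∅) ∀ V ⊆ [n]}` iff there is
a permutation `σ` of `[n]` with `π_{σ(t)} = f(V_t) − f(V_{t−1})`, where
`V_t = {σ(1),…,σ(t)}` and `V_0 = ∅`. (Here `t : Fin n` is 0-based, so
`V_{t+1} = σ({s : s ≤ t})` and `V_t = σ({s : s < t})`.) -/
theorem extreme_points_extended_polymatroid (n : ℕ) (f : Finset (Fin n) → ℝ)
    (hsub : ∀ S₁ S₂ : Finset (Fin n), f (S₁ ∪ S₂) + f (S₁ ∩ S₂) ≤ f S₁ + f S₂)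
    (π : Fin n → ℝ) :
    π ∈ Set.extremePoints ℝ
        {π' : Fin n → ℝ | ∀ V : Finset (Fin n), ∑ i ∈ V, π' i ≤ f V - f ∅}
    ↔ ∃ σ : Equiv.Perm (Fin n), ∀ t : Fin n,
        π (σ t) = f ((Finset.univ.filter (fun s : Fin n => s ≤ t)).image σ)
                  - f ((Finset.univ.filter (fun s : Fin n => s < t)).image σ) := by
  exact ⟨fun h => exists_perm_of_extreme f hsub π h,
    fun ⟨σ, hσ⟩ => extreme_of_perm f hsub π σ hσ⟩
end

section
/- For each j ∈ [p], let f_j : {0,1}^n → ℝ_+ be a nonnegative submodular function and K_j ⊆ ℝ^{q_j} a convex cone containing the origin. Then conv(S({f_j},{K_j})) = Ŝ({f_j},{K_j}), and moreover Ŝ({f_j},{K_j}) = {(x,z) ∈ ℝ^{mp} × [0,1]^n : ∃ y ∈ ℝ^p such that for all j ∈ [p], (y_j,z) ∈ conv(Epi(f_j)) and A^j x^j + B^j y_j ∈ K_j}. -/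
lemma aux_tele (g : ℕ → ℝ) (j : ℕ) (N : ℕ) :
    ∑ k ∈ Finset.range N, (g k - g (k+1)) * (if j < k then (1:ℝ) else 0)
      = if j + 1 ≤ N then g (j+1) - g N else 0 := by
  induction N with
  | zero => simp
  | succ N ih =>
    rw [Finset.sum_range_succ, ih]
    rcases lt_trichotomy j N with h | h | h
    · have h1 : j + 1 ≤ N := h
      have h2 : j + 1 ≤ N + 1 := by omega
      simp only [h, h1, h2, if_true]; ring
    · subst h
      simp
    · have h1 : ¬ (j + 1 ≤ N) := by omega
      have h2 : ¬ (j + 1 ≤ N + 1) := by omega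
      have h3 : ¬ (j < N) := by omega
      simp only [h1, h2, h3, if_false]; ring

lemma aux_chain {n : ℕ} (z : Fin n → ℝ) (hz : ∀ i, z i ∈ Set.Icc (0:ℝ) 1) :
    ∃ (r : Fin n → ℕ) (lam : ℕ → ℝ), Function.Injective r ∧ (∀ i, r i < n) ∧
      (∀ k ∈ Finset.range (n+1), 0 ≤ lam k) ∧ ∑ k ∈ Finset.range (n+1), lam k = 1 ∧
      ∀ i, ∑ k ∈ Finset.range (n+1), lam k * (if r i < k then (1:ℝ) else 0) = z i := by
  let w : Fin n → ℝ := fun i => - z i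
  let σ : Equiv.Perm (Fin n) := Tuple.sort w
  have hmono : Monotone (w ∘ σ) := Tuple.monotone_sort w
  let g : ℕ → ℝ := fun k => match k with
    | 0 => 1
    | k+1 => if h : k < n then z (σ ⟨k, h⟩) else 0
  have hgn : g (n+1) = 0 := by simp [g]
  refine ⟨fun i => (σ.symm i : ℕ), fun k => g k - g (k+1), ?_, fun i => (σ.symm i).2, ?_, ?_, ?_⟩
  · intro a b hab
    exact σ.symm.injective (Fin.ext hab)
  · intro k hk
    rw [sub_nonneg]
    rcases k with _ | k
    · simp only [g]
      split_ifs
      · exact (hz _).2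
      · norm_num
    · have hk' : k < n := by simpa using hk
      simp only [g, hk', dif_pos]
      split_ifs with h
      · have := @hmono ⟨k, hk'⟩ ⟨k+1, h⟩ (by simp)
        simp only [w, Function.comp] at this
        linarith
      · exact (hz _).1
  · rw [Finset.sum_range_sub', hgn]; simp [g]
  · intro i
    have hi := (σ.symm i).2
    rw [aux_tele, if_pos (by dsimp only; omega), hgn]
    simp [g]

/-- Greedy minorant. -/
lemma aux_greedy {n : ℕ} (f : Finset (Fin n) → ℝ)
    (hsub : ∀ S₁ S₂ : Finset (Fin n), f (S₁ ∪ S₂) + f (S₁ ∩ S₂) ≤ f S₁ + f S₂)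
    (r : Fin n → ℕ) (hr : Function.Injective r) (V : ℕ → Finset (Fin n))
    (hV : ∀ k i, i ∈ V k ↔ r i < k) (s : Fin n → ℝ)
    (hs : ∀ i, s i = f (V (r i + 1)) - f (V (r i))) :
    (∀ k W, f ∅ + ∑ i ∈ W ∩ V k, s i ≤ f (W ∩ V k)) ∧
    (∀ k, f ∅ + ∑ i ∈ V k, s i = f (V k)) := by
  have hV0 : V 0 = ∅ := by
    ext i; simp [hV]
  have hstep : ∀ k, (V (k+1) = V k) ∨ ∃ i, r i = k ∧ i ∉ V k ∧ V (k+1) = insert i (V k) := by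
    intro k
    by_cases h : ∃ i, r i = k
    · obtain ⟨i, hi⟩ := h
      refine Or.inr ⟨i, hi, by simp [hV, hi], ?_⟩
      ext a
      simp only [hV, Finset.mem_insert]
      constructor
      · intro ha
        rcases Nat.lt_succ_iff_lt_or_eq.1 ha with h | h
        · exact Or.inr h
        · exact Or.inl (hr (h.trans hi.symm))
      · rintro (rfl | h) <;> omega
    · left
      ext a
      simp only [hV]
      have : r a ≠ k := fun h' => h ⟨a, h'⟩
      omega
  constructor
  · intro k W
    induction k with
    | zero => simp [hV0]
    | succ k ih =>
      rcases hstep k with h | ⟨i, hi, hiV, h⟩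
      · rw [h]; exact ih
      · by_cases hiW : i ∈ W
        · have e1 : W ∩ V (k+1) = insert i (W ∩ V k) := by
            rw [h, Finset.inter_insert_of_mem hiW]
          have hn : i ∉ W ∩ V k := by simp [hiV]
          have h1 := hsub (W ∩ V (k+1)) (V k)
          have e2 : (W ∩ V (k+1)) ∪ V k = V (k+1) := by
            rw [e1, h]; ext a; simp; tauto
          have e3 : (W ∩ V (k+1)) ∩ V k = W ∩ V k := by
            rw [h]; ext a; simp; tauto
          rw [e2, e3] at h1
          have e4 : ∑ a ∈ W ∩ V (k+1), s a = s i + ∑ a ∈ W ∩ V k, s a := by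
            rw [e1, Finset.sum_insert hn]
          rw [e4, hs i, hi]
          linarith
        · rw [h, Finset.inter_insert_of_notMem hiW]; exact ih
  · intro k
    induction k with
    | zero => simp [hV0]
    | succ k ih =>
      rcases hstep k with h | ⟨i, hi, hiV, h⟩
      · rw [h]; exact ih
      · have e4 : ∑ a ∈ V (k+1), s a = s i + ∑ a ∈ V k, s a := by
          rw [h, Finset.sum_insert hiV]
        rw [e4, hs i, hi]
        linarith

lemma aux_inter {p n : ℕ} (f : Fin p → Finset (Fin n) → ℝ)
    (hsub : ∀ j, ∀ S₁ S₂ : Finset (Fin n),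
      f j (S₁ ∪ S₂) + f j (S₁ ∩ S₂) ≤ f j S₁ + f j S₂)
    (y : Fin p → ℝ) (z : Fin n → ℝ) (hz : ∀ i, z i ∈ Set.Icc (0:ℝ) 1)
    (hy : ∀ j, (y j, z) ∈ convexHull ℝ {yz : ℝ × (Fin n → ℝ) | ∃ V : Finset (Fin n),
      (∀ i, yz.2 i = if i ∈ V then (1:ℝ) else 0) ∧ f j V ≤ yz.1}) :
    (y, z) ∈ convexHull ℝ {yz : (Fin p → ℝ) × (Fin n → ℝ) | ∃ V : Finset (Fin n),
      (∀ i, yz.2 i = if i ∈ V then (1:ℝ) else 0) ∧ ∀ j, f j V ≤ yz.1 j} := by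
  obtain ⟨r, lam, hr, hrn, hlam0, hlam1, hlamz⟩ := aux_chain z hz
  let V : ℕ → Finset (Fin n) := fun k => Finset.univ.filter (fun i => r i < k)
  have hV : ∀ k i, i ∈ V k ↔ r i < k := by intro k i; simp [V]
  let L : Fin p → ℝ := fun j => ∑ k ∈ Finset.range (n+1), lam k * f j (V k)
  have hL : ∀ j, L j ≤ y j := by
    intro j
    let s : Fin n → ℝ := fun i => f j (V (r i + 1)) - f j (V (r i))
    obtain ⟨h1, h2⟩ := aux_greedy (f j) (hsub j) r hr V hV s (fun i => rfl)
    have hVn : V n = Finset.univ := by ext i; simp [hV, hrn]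
    have hmin : ∀ W, f j ∅ + ∑ i ∈ W, s i ≤ f j W := by
      intro W; simpa [hVn] using h1 n W
    have hhalf : Convex ℝ {yz : ℝ × (Fin n → ℝ) | f j ∅ + ∑ i, s i * yz.2 i ≤ yz.1} := by
      intro P hP Q hQ a b ha hb hab
      simp only [Set.mem_setOf_eq] at hP hQ ⊢
      have e : ∑ i, s i * (a • P + b • Q).2 i = a * ∑ i, s i * P.2 i + b * ∑ i, s i * Q.2 i := by
        rw [Finset.mul_sum, Finset.mul_sum, ← Finset.sum_add_distrib]
        refine Finset.sum_congr rfl fun i _ => ?_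
        simp; ring
      rw [e]
      have e2 : (a • P + b • Q).1 = a * P.1 + b * Q.1 := by simp
      rw [e2]
      have := mul_le_mul_of_nonneg_left hP ha
      have := mul_le_mul_of_nonneg_left hQ hb
      have e3 : f j ∅ = a * f j ∅ + b * f j ∅ := by rw [← add_mul, hab, one_mul]
      linarith
    have hle : f j ∅ + ∑ i, s i * z i ≤ y j := by
      refine convexHull_min ?_ hhalf (hy j)
      rintro ⟨t, u⟩ ⟨W, hu, ht⟩
      simp only [Set.mem_setOf_eq] at hu ht ⊢
      have := hmin W
      simp only [hu, mul_ite, mul_one, mul_zero, Finset.sum_ite_mem, Finset.univ_inter]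
      linarith
    have heq : L j = f j ∅ + ∑ i, s i * z i := by
      have e1 : ∑ i, s i * z i = ∑ k ∈ Finset.range (n+1), lam k * ∑ i ∈ V k, s i := by
        simp_rw [← hlamz, Finset.mul_sum]
        rw [Finset.sum_comm]
        refine Finset.sum_congr rfl fun k _ => ?_
        rw [Finset.sum_filter]
        refine Finset.sum_congr rfl fun i _ => ?_
        split_ifs <;> ring
      have e2 : f j ∅ = ∑ k ∈ Finset.range (n+1), lam k * f j ∅ := by
        rw [← Finset.sum_mul, hlam1, one_mul]
      rw [e1]
      conv_rhs => rw [e2]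
      rw [← Finset.sum_add_distrib]
      refine Finset.sum_congr rfl fun k _ => ?_
      rw [← h2 k]; ring
    rw [heq]; exact hle
  have key := (convex_convexHull ℝ {yz : (Fin p → ℝ) × (Fin n → ℝ) | ∃ V : Finset (Fin n),
      (∀ i, yz.2 i = if i ∈ V then (1:ℝ) else 0) ∧ ∀ j, f j V ≤ yz.1 j}).sum_mem
      (t := Finset.range (n+1)) (w := lam)
      (z := fun k => ((fun j => f j (V k) + (y j - L j)), fun i => if i ∈ V k then (1:ℝ) else 0))
      hlam0 hlam1 (fun k _ => subset_convexHull ℝ _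
        ⟨V k, fun i => rfl, fun j => by simpa using hL j⟩)
  convert key using 1
  refine Prod.ext ?_ ?_
  · funext j
    simp only [Prod.fst_sum, Finset.sum_apply, Prod.smul_fst, Pi.smul_apply, smul_eq_mul, mul_add,
      Finset.sum_add_distrib]
    rw [← Finset.sum_mul, hlam1]
    simp [L]
  · funext i
    simp only [Prod.snd_sum, Finset.sum_apply, Prod.smul_snd, Pi.smul_apply, smul_eq_mul, hV]
    exact (hlamz i).symm


/-- Corollary 4: for nonnegative submodular `f_j : {0,1}^n → ℝ_+` and convex cones `K_j`
containing the origin, `conv(S({f_j},{K_j})) = Ŝ({f_j},{K_j})`, and moreover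
`Ŝ({f_j},{K_j})` equals the set described by per-`j` epigraph hulls
`(y_j,z) ∈ conv(Epi(f_j))` together with the conic constraints. Binary vectors `z` are
identified with characteristic vectors of subsets `V ⊆ [n]`. -/
theorem conv_S_multi_submodular (p n m : ℕ) (q : Fin p → ℕ)
    (f : Fin p → Finset (Fin n) → ℝ)
    (hf : ∀ j, ∀ V : Finset (Fin n), 0 ≤ f j V)
    (hsub : ∀ j, ∀ S₁ S₂ : Finset (Fin n),
      f j (S₁ ∪ S₂) + f j (S₁ ∩ S₂) ≤ f j S₁ + f j S₂)
    (K : ∀ j, Set (Fin (q j) → ℝ))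
    (hK0 : ∀ j, (0 : Fin (q j) → ℝ) ∈ K j)
    (hKadd : ∀ j, ∀ a ∈ K j, ∀ b ∈ K j, a + b ∈ K j)
    (hKsmul : ∀ j, ∀ c : ℝ, 0 ≤ c → ∀ a ∈ K j, c • a ∈ K j)
    (A : ∀ j, Matrix (Fin (q j)) (Fin m) ℝ) (B : ∀ j, Fin (q j) → ℝ)
    (S Shat : Set ((Fin p → Fin m → ℝ) × (Fin n → ℝ)))
    (G : Set ((Fin p → ℝ) × (Fin n → ℝ)))
    (Epi : Fin p → Set (ℝ × (Fin n → ℝ)))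
    (hS : S = {w | ∃ V : Finset (Fin n), (∀ i, w.2 i = if i ∈ V then (1:ℝ) else 0) ∧
      ∃ y : Fin p → ℝ, ∀ j, f j V ≤ y j ∧ (A j).mulVec (w.1 j) + y j • B j ∈ K j})
    (hG : G = {yz | ∃ V : Finset (Fin n),
      (∀ i, yz.2 i = if i ∈ V then (1:ℝ) else 0) ∧ ∀ j, f j V ≤ yz.1 j})
    (hEpi : ∀ j, Epi j = {yz : ℝ × (Fin n → ℝ) | ∃ V : Finset (Fin n),
      (∀ i, yz.2 i = if i ∈ V then (1:ℝ) else 0) ∧ f j V ≤ yz.1})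
    (hShat : Shat = {w | (∀ i, w.2 i ∈ Set.Icc (0:ℝ) 1) ∧ ∃ y : Fin p → ℝ,
      (y, w.2) ∈ convexHull ℝ G ∧
      ∀ j, (A j).mulVec (w.1 j) + y j • B j ∈ K j}) :
    convexHull ℝ S = Shat ∧
    Shat = {w | (∀ i, w.2 i ∈ Set.Icc (0:ℝ) 1) ∧ ∃ y : Fin p → ℝ,
      ∀ j, (y j, w.2) ∈ convexHull ℝ (Epi j) ∧
        (A j).mulVec (w.1 j) + y j • B j ∈ K j} := by
  subst hS hG hShat
  obtain rfl : Epi = _ := funext hEpi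
  have hGEpi : ∀ (y : Fin p → ℝ) (z : Fin n → ℝ), (y, z) ∈ convexHull ℝ
      {yz : (Fin p → ℝ) × (Fin n → ℝ) | ∃ V : Finset (Fin n),
        (∀ i, yz.2 i = if i ∈ V then (1:ℝ) else 0) ∧ ∀ j, f j V ≤ yz.1 j} →
      ∀ j, (y j, z) ∈ convexHull ℝ {yz : ℝ × (Fin n → ℝ) | ∃ V : Finset (Fin n),
        (∀ i, yz.2 i = if i ∈ V then (1:ℝ) else 0) ∧ f j V ≤ yz.1} := by
    intro y z h j
    have hc : Convex ℝ {yz : (Fin p → ℝ) × (Fin n → ℝ) | (yz.1 j, yz.2) ∈ convexHull ℝ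
        {yz : ℝ × (Fin n → ℝ) | ∃ V : Finset (Fin n),
        (∀ i, yz.2 i = if i ∈ V then (1:ℝ) else 0) ∧ f j V ≤ yz.1}} := by
      intro P hP Q hQ a b ha hb hab
      exact (convex_convexHull ℝ _) hP hQ ha hb hab
    refine convexHull_min ?_ hc h
    rintro ⟨t, u⟩ ⟨V, hu, ht⟩
    exact subset_convexHull ℝ _ ⟨V, hu, ht j⟩
  refine ⟨Set.Subset.antisymm ?_ ?_, Set.Subset.antisymm ?_ ?_⟩
  · refine convexHull_min ?_ ?_
    · rintro ⟨x, z⟩ ⟨V, hz, y, hy⟩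
      refine ⟨fun i => ?_, y, subset_convexHull ℝ _ ⟨V, hz, fun j => (hy j).1⟩, fun j => (hy j).2⟩
      rw [hz i]
      split_ifs <;> simp
    · rintro ⟨x, z⟩ ⟨hz, y, hy, hyK⟩ ⟨x', z'⟩ ⟨hz', y', hy', hyK'⟩ a b ha hb hab
      refine ⟨fun i => (convex_Icc (0:ℝ) 1) (hz i) (hz' i) ha hb hab, a • y + b • y',
        (convex_convexHull ℝ _) hy hy' ha hb hab, fun j => ?_⟩
      have := hKadd j _ (hKsmul j a ha _ (hyK j)) _ (hKsmul j b hb _ (hyK' j))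
      convert this using 1
      simp only [Prod.fst_add, Prod.smul_fst, Pi.add_apply, Pi.smul_apply, Matrix.mulVec_add,
        Matrix.mulVec_smul, smul_eq_mul]
      module
  · rintro ⟨x, z⟩ ⟨hz, y, hy, hyK⟩
    let T : Set ((Fin p → ℝ) × (Fin n → ℝ)) := {yz | (∀ j, 0 ≤ yz.1 j) ∧
      ∀ x : Fin p → Fin m → ℝ, (∀ j, (A j).mulVec (x j) + yz.1 j • B j ∈ K j) →
        (x, yz.2) ∈ convexHull ℝ {w : (Fin p → Fin m → ℝ) × (Fin n → ℝ) |
      ∃ V : Finset (Fin n), (∀ i, w.2 i = if i ∈ V then (1:ℝ) else 0) ∧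
      ∃ y : Fin p → ℝ, ∀ j, f j V ≤ y j ∧ (A j).mulVec (w.1 j) + y j • B j ∈ K j}}
    have hT : Convex ℝ T := by
      rw [convex_iff_forall_pos]
      rintro ⟨u, v⟩ ⟨hu, hP⟩ ⟨u', v'⟩ ⟨hu', hQ⟩ a b ha hb hab
      simp only at hu hu' hP hQ
      refine ⟨fun j => ?_, fun x hx => ?_⟩
      · have := mul_nonneg ha.le (hu j)
        have := mul_nonneg hb.le (hu' j)
        simp only [Prod.fst_add, Prod.smul_fst, Pi.add_apply, Pi.smul_apply, smul_eq_mul]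
        linarith
      · simp only [Prod.fst_add, Prod.smul_fst, Pi.add_apply, Pi.smul_apply, smul_eq_mul] at hx
        let Y : Fin p → ℝ := fun j => a * u j + b * u' j
        have hY0 : ∀ j, Y j = 0 → u j = 0 ∧ u' j = 0 := by
          intro j h
          have h1 := mul_nonneg ha.le (hu j)
          have h2 := mul_nonneg hb.le (hu' j)
          simp only [Y] at h
          have h3 : a * u j = 0 := by linarith
          have h4 : b * u' j = 0 := by linarith
          exact ⟨(mul_eq_zero.1 h3).resolve_left ha.ne', (mul_eq_zero.1 h4).resolve_left hb.ne'⟩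
        have hYn : ∀ j, 0 ≤ Y j := fun j =>
          add_nonneg (mul_nonneg ha.le (hu j)) (mul_nonneg hb.le (hu' j))
        let c : (Fin p → ℝ) → Fin p → ℝ := fun t j => if Y j = 0 then 1 else t j / Y j
        have hc : ∀ t : Fin p → ℝ, (∀ j, 0 ≤ t j) → (∀ j, Y j = 0 → t j = 0) →
            ∀ j, (A j).mulVec (c t j • x j) + t j • B j ∈ K j := by
          intro t ht ht0 j
          have e : t j = c t j * Y j := by
            by_cases h : Y j = 0
            · simp [h, ht0 j h]
            · simp [c, h]
          have hcn : 0 ≤ c t j := by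
            by_cases h : Y j = 0
            · simp [c, h]
            · simp only [c, h, if_false]; exact div_nonneg (ht j) (hYn j)
          have := hKsmul j (c t j) hcn _ (hx j)
          convert this using 1
          rw [Matrix.mulVec_smul, smul_add, smul_smul]
          congr 2
        have h1 := hP (fun j => c u j • x j) (hc u hu fun j h => (hY0 j h).1)
        have h2 := hQ (fun j => c u' j • x j) (hc u' hu' fun j h => (hY0 j h).2)
        have h3 := (convex_convexHull ℝ _) h1 h2 ha.le hb.le hab
        convert h3 using 1
        refine Prod.ext ?_ rfl
        funext j
        simp only [Prod.fst_add, Prod.smul_fst, Pi.add_apply, Pi.smul_apply, smul_smul]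
        rw [← add_smul]
        have : a * c u j + b * c u' j = 1 := by
          by_cases h : Y j = 0
          · simp [c, h, hab]
          · simp only [c, h, if_false]
            field_simp
            rfl
        rw [this, one_smul]
    have hmem : (y, z) ∈ T := by
      refine convexHull_min ?_ hT hy
      rintro ⟨u, v⟩ ⟨V, hv, hu⟩
      exact ⟨fun j => (hf j V).trans (hu j), fun x hx =>
        subset_convexHull ℝ _ ⟨V, hv, u, fun j => ⟨hu j, hx j⟩⟩⟩
    exact hmem.2 x hyK
  · rintro ⟨x, z⟩ ⟨hz, y, hy, hyK⟩
    exact ⟨hz, y, fun j => ⟨hGEpi y z hy j, hyK j⟩⟩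
  · rintro ⟨x, z⟩ ⟨hz, y, hy⟩
    exact ⟨hz, y, aux_inter f hsub y z hz (fun j => (hy j).1), fun j => (hy j).2⟩
end

section
/- Let σ ∈ ℝ, c ∈ ℝ^n, d ∈ ℝ^{m−1}_+ with σ + Σ_{i∈[n]} c_i z_i ≥ 0 for all z ∈ {0,1}^n, and define f(z) := √(σ + Σ_{i∈[n]} c_i z_i) and H := {(x,z) ∈ ℝ^m_+ × {0,1}^n : √(σ + Σ_{i∈[n]} c_i z_i + Σ_{j∈[m−1]} d_j x_j²) ≤ x_m}. Then conv(H) = {(x,z) ∈ ℝ^m_+ × [0,1]^n : ∃ y ∈ ℝ_+ such that (y,z) ∈ conv(Epi(f)) and √(y² + Σ_{i∈[m−1]} d_i x_i²) ≤ x_m}. -/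
/-- Cauchy-Schwarz for the weighted form `y² + Σ d x²`. -/
lemma cs_aux {m : ℕ} (d : Fin m → ℝ) (hd : ∀ j, 0 ≤ d j) (u v : ℝ) (x x' : Fin m → ℝ)
    (p q : ℝ) (hp : 0 ≤ p) (hq : 0 ≤ q)
    (h1 : u ^ 2 + ∑ j, d j * (x j) ^ 2 ≤ p ^ 2)
    (h2 : v ^ 2 + ∑ j, d j * (x' j) ^ 2 ≤ q ^ 2) :
    u * v + ∑ j, d j * (x j * x' j) ≤ p * q := by
  have key := Finset.sum_sq_le_sum_mul_sum_of_sq_eq_mul (Finset.univ : Finset (Option (Fin m)))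
    (r := fun o => o.elim (u * v) (fun j => d j * (x j * x' j)))
    (f := fun o => o.elim (u ^ 2) (fun j => d j * (x j) ^ 2))
    (g := fun o => o.elim (v ^ 2) (fun j => d j * (x' j) ^ 2))
    (by
      rintro (_ | j) _
      · simpa using sq_nonneg u
      · simpa using mul_nonneg (hd j) (sq_nonneg (x j)))
    (by
      rintro (_ | j) _
      · simpa using sq_nonneg v
      · simpa using mul_nonneg (hd j) (sq_nonneg (x' j)))
    (by
      rintro (_ | j) _
      · simp only [Option.elim]; ring
      · simp only [Option.elim]; ring)
  simp only [Fintype.sum_option, Option.elim] at key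
  have hB : 0 ≤ v ^ 2 + ∑ j, d j * (x' j) ^ 2 :=
    add_nonneg (sq_nonneg v) (Finset.sum_nonneg fun j _ => mul_nonneg (hd j) (sq_nonneg _))
  have h3 := mul_le_mul h1 h2 hB (sq_nonneg p)
  have h4 : (u * v + ∑ j, d j * (x j * x' j)) ^ 2 ≤ (p * q) ^ 2 := by
    rw [mul_pow]; exact key.trans h3
  exact (abs_le_of_sq_le_sq' h4 (mul_nonneg hp hq)).2

/-- Convexity of the weighted second-order cone. -/
lemma cone_aux {m : ℕ} (d : Fin m → ℝ) (hd : ∀ j, 0 ≤ d j) (u v : ℝ) (x x' : Fin m → ℝ)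
    (p q a b : ℝ) (hp : 0 ≤ p) (hq : 0 ≤ q) (ha : 0 ≤ a) (hb : 0 ≤ b)
    (h1 : u ^ 2 + ∑ j, d j * (x j) ^ 2 ≤ p ^ 2)
    (h2 : v ^ 2 + ∑ j, d j * (x' j) ^ 2 ≤ q ^ 2) :
    (a * u + b * v) ^ 2 + ∑ j, d j * (a * x j + b * x' j) ^ 2 ≤ (a * p + b * q) ^ 2 := by
  have h := cs_aux d hd u v x x' p q hp hq h1 h2
  have e : ∑ j, d j * (a * x j + b * x' j) ^ 2 = a ^ 2 * ∑ j, d j * (x j) ^ 2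
      + b ^ 2 * ∑ j, d j * (x' j) ^ 2 + 2 * (a * b) * ∑ j, d j * (x j * x' j) := by
    rw [Finset.mul_sum, Finset.mul_sum, Finset.mul_sum, ← Finset.sum_add_distrib,
      ← Finset.sum_add_distrib]
    exact Finset.sum_congr rfl fun j _ => by ring
  rw [e]
  have k1 := mul_le_mul_of_nonneg_left h1 (sq_nonneg a)
  have k2 := mul_le_mul_of_nonneg_left h2 (sq_nonneg b)
  have k3 := mul_le_mul_of_nonneg_left h (mul_nonneg ha hb)
  linarith

/-- Proposition 5 of Atamtürk–Gómez: convex hull of the set `H`. The continuous vector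
lives in `ℝ^{m+1}` (so `m` here plays the role of `m−1` in the paper), with
`x_m = x (Fin.last m)` the last coordinate and `d ∈ ℝ^m_+`. -/
theorem conv_H (n m : ℕ) (σ : ℝ) (c : Fin n → ℝ) (d : Fin m → ℝ)
    (hd : ∀ j, 0 ≤ d j)
    (hσc : ∀ z : Fin n → ℝ, (∀ i, z i = 0 ∨ z i = 1) → 0 ≤ σ + ∑ i, c i * z i) :
    convexHull ℝ {w : (Fin (m+1) → ℝ) × (Fin n → ℝ) |
      (∀ j, 0 ≤ w.1 j) ∧ (∀ i, w.2 i = 0 ∨ w.2 i = 1) ∧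
      Real.sqrt (σ + ∑ i, c i * w.2 i + ∑ j : Fin m, d j * (w.1 j.castSucc)^2)
        ≤ w.1 (Fin.last m)}
    = {w : (Fin (m+1) → ℝ) × (Fin n → ℝ) |
      (∀ j, 0 ≤ w.1 j) ∧ (∀ i, w.2 i ∈ Set.Icc (0:ℝ) 1) ∧
      ∃ y : ℝ, 0 ≤ y ∧
        (y, w.2) ∈ convexHull ℝ {yz : ℝ × (Fin n → ℝ) |
          (∀ i, yz.2 i = 0 ∨ yz.2 i = 1) ∧
          Real.sqrt (σ + ∑ i, c i * yz.2 i) ≤ yz.1} ∧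
        Real.sqrt (y^2 + ∑ j : Fin m, d j * (w.1 j.castSucc)^2) ≤ w.1 (Fin.last m)} := by
  apply Set.Subset.antisymm
  · apply convexHull_min
    · rintro ⟨x, z⟩ ⟨hx, hz, hs⟩
      dsimp only at hx hz hs
      refine ⟨hx, fun i => ?_, Real.sqrt (σ + ∑ i, c i * z i), Real.sqrt_nonneg _,
        subset_convexHull ℝ _ ⟨hz, le_refl _⟩, ?_⟩
      · dsimp only
        rcases hz i with h | h <;> rw [h] <;> norm_num
      · dsimp only
        rw [Real.sq_sqrt (hσc z hz)]
        exact hs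
    · rintro ⟨x, z⟩ ⟨hx, hz, y, hy, hyz, hs⟩ ⟨x', z'⟩ ⟨hx', hz', y', hy', hyz', hs'⟩ a b ha hb hab
      dsimp only at hx hz hyz hs hx' hz' hyz' hs'
      refine ⟨fun j => ?_, fun i => ?_, a * y + b * y', by positivity, ?_, ?_⟩
      · exact add_nonneg (mul_nonneg ha (hx j)) (mul_nonneg hb (hx' j))
      · exact (convex_Icc (0:ℝ) 1) (hz i) (hz' i) ha hb hab
      · exact (convex_convexHull ℝ _) hyz hyz' ha hb hab
      · rw [Real.sqrt_le_left (hx _)] at hs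
        rw [Real.sqrt_le_left (hx' _)] at hs'
        apply Real.sqrt_le_iff.2
        refine ⟨add_nonneg (mul_nonneg ha (hx _)) (mul_nonneg hb (hx' _)), ?_⟩
        exact cone_aux d hd y y' (fun j => x j.castSucc) (fun j => x' j.castSucc) _ _ a b
          (hx _) (hx' _) ha hb hs hs'
  · rintro ⟨x, z⟩ ⟨hx, hz, y, hy, hyz, hs⟩
    dsimp only at hx hz hyz hs
    have hs2 := (Real.sqrt_le_left (hx _)).1 hs
    set H := {w : (Fin (m+1) → ℝ) × (Fin n → ℝ) |
      (∀ j, 0 ≤ w.1 j) ∧ (∀ i, w.2 i = 0 ∨ w.2 i = 1) ∧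
      Real.sqrt (σ + ∑ i, c i * w.2 i + ∑ j : Fin m, d j * (w.1 j.castSucc)^2)
        ≤ w.1 (Fin.last m)} with hH
    rcases hy.eq_or_lt with h0 | hpos
    · subst h0
      have hsub : convexHull ℝ {yz : ℝ × (Fin n → ℝ) |
          (∀ i, yz.2 i = 0 ∨ yz.2 i = 1) ∧ Real.sqrt (σ + ∑ i, c i * yz.2 i) ≤ yz.1}
          ⊆ {yz | 0 ≤ yz.1 ∧ (yz.1 = 0 → (x, yz.2) ∈ convexHull ℝ H)} := by
        apply convexHull_min
        · rintro ⟨t, w⟩ ⟨hw, ht⟩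
          dsimp only at hw ht
          refine ⟨(Real.sqrt_nonneg _).trans ht, fun h => subset_convexHull ℝ _ ⟨hx, hw, ?_⟩⟩
          dsimp only at h ⊢
          subst h
          have : σ + ∑ i, c i * w i = 0 :=
            le_antisymm (Real.sqrt_eq_zero'.1 (le_antisymm ht (Real.sqrt_nonneg _))) (hσc w hw)
          rw [this]
          simpa using hs
        · rintro ⟨t, w⟩ ⟨ht, hw⟩ ⟨t', w'⟩ ⟨ht', hw'⟩ a b ha hb hab
          dsimp only at ht hw ht' hw'
          refine ⟨add_nonneg (mul_nonneg ha ht) (mul_nonneg hb ht'), fun h => ?_⟩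
          change a * t + b * t' = 0 at h
          have p1 := mul_nonneg ha ht
          have p2 := mul_nonneg hb ht'
          have e1 : a * t = 0 := by linarith
          have e2 : b * t' = 0 := by linarith
          change (x, a • w + b • w') ∈ convexHull ℝ H
          rcases mul_eq_zero.1 e1 with rfl | h1
          · have : b = 1 := by linarith
            subst this
            simpa using hw' (by simpa using e2)
          rcases mul_eq_zero.1 e2 with rfl | h2
          · have : a = 1 := by linarith
            subst this
            simpa using hw h1
          have := (convex_convexHull ℝ H) (hw h1) (hw' h2) ha hb hab
          have e : a • (x, w) + b • (x, w') = (x, a • w + b • w') := by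
            rw [Prod.smul_mk, Prod.smul_mk, Prod.mk_add_mk, ← add_smul, hab, one_smul]
          rwa [e] at this
      exact (hsub hyz).2 rfl
    · have hsub : convexHull ℝ {yz : ℝ × (Fin n → ℝ) |
          (∀ i, yz.2 i = 0 ∨ yz.2 i = 1) ∧ Real.sqrt (σ + ∑ i, c i * yz.2 i) ≤ yz.1}
          ⊆ {yz | ((yz.1 / y) • x, yz.2) ∈ convexHull ℝ H} := by
        apply convexHull_min
        · rintro ⟨t, w⟩ ⟨hw, ht⟩
          dsimp only at hw ht
          have ht0 : 0 ≤ t := (Real.sqrt_nonneg _).trans ht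
          have hr : 0 ≤ t / y := div_nonneg ht0 hy
          refine subset_convexHull ℝ _ ⟨fun j => mul_nonneg hr (hx j), hw, ?_⟩
          apply Real.sqrt_le_iff.2
          refine ⟨mul_nonneg hr (hx _), ?_⟩
          have h1 := (Real.sqrt_le_left ht0).1 ht
          have h2 := mul_le_mul_of_nonneg_left hs2 (sq_nonneg (t / y))
          have e : ∑ j : Fin m, d j * (((t / y) • x) j.castSucc) ^ 2
              = (t / y) ^ 2 * ∑ j : Fin m, d j * (x j.castSucc) ^ 2 := by
            rw [Finset.mul_sum]
            exact Finset.sum_congr rfl fun j _ => by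
              simp only [Pi.smul_apply, smul_eq_mul]; ring
          have e2 : (t / y) ^ 2 * y ^ 2 = t ^ 2 := by field_simp
          dsimp only
          rw [e, Pi.smul_apply, smul_eq_mul, mul_pow]
          rw [mul_add, e2] at h2
          linarith
        · rintro ⟨t, w⟩ hw ⟨t', w'⟩ hw' a b ha hb hab
          have := (convex_convexHull ℝ H) hw hw' ha hb hab
          have e : a • ((t / y) • x, w) + b • ((t' / y) • x, w')
              = (((a * t + b * t') / y) • x, a • w + b • w') := by
            rw [Prod.smul_mk, Prod.smul_mk, Prod.mk_add_mk, smul_smul, smul_smul, ← add_smul]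
            congr 2
            ring
          dsimp only at this
          rw [e] at this
          exact this
      have := hsub hyz
      change ((y / y) • x, z) ∈ convexHull ℝ H at this
      rwa [div_self hpos.ne', one_smul] at this
end

section
/- Let σ ∈ ℝ, c ∈ ℝ^n, d ∈ ℝ^{m−2}_+ with σ + Σ_{i∈[n]} c_i z_i ≥ 0 for all z ∈ {0,1}^n, and define f(z) := √(σ + Σ_{i∈[n]} c_i z_i) and R := {(x,z) ∈ ℝ^m_+ × {0,1}^n : σ + Σ_{i∈[n]} c_i z_i + Σ_{j∈[m−2]} d_j x_j² ≤ 4 x_{m−1} x_m}. Then conv(R) = {(x,z) ∈ ℝ^m_+ × [0,1]^n : ∃ y ∈ ℝ_+ such that (y,z) ∈ conv(Epi(f)) and y² + Σ_{i∈[m−2]} d_i x_i² ≤ 4 x_{m−1} x_m}. -/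
lemma aux_cs {m : ℕ} (d x x' : Fin m → ℝ) (hd : ∀ j, 0 ≤ d j) :
    (∑ j, d j * (x j * x' j))^2 ≤ (∑ j, d j * (x j)^2) * (∑ j, d j * (x' j)^2) := by
  have h := Finset.sum_mul_sq_le_sq_mul_sq Finset.univ
    (fun j => Real.sqrt (d j) * x j) (fun j => Real.sqrt (d j) * x' j)
  have e1 : ∀ j, Real.sqrt (d j) * x j * (Real.sqrt (d j) * x' j) = d j * (x j * x' j) := by
    intro j
    have := Real.mul_self_sqrt (hd j)
    linear_combination (x j * x' j) * this
  have e2 : ∀ j (t : ℝ), (Real.sqrt (d j) * t)^2 = d j * t^2 := by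
    intro j t
    rw [mul_pow, Real.sq_sqrt (hd j)]
  simpa only [e1, e2] using h

lemma aux_B {y y' S P Q a b a' b' : ℝ} (hP : 0 ≤ P) (hQ : 0 ≤ Q) (hS : S^2 ≤ P * Q)
    (ha : 0 ≤ a) (hb : 0 ≤ b) (ha' : 0 ≤ a') (hb' : 0 ≤ b')
    (h : y^2 + P ≤ 4 * a * b) (h' : y'^2 + Q ≤ 4 * a' * b') :
    y * y' + S ≤ 2 * (a * b' + a' * b) := by
  have h1 : 2 * y * y' * S ≤ y^2 * Q + y'^2 * P := by
    apply le_of_abs_le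
    refine abs_le_of_sq_le_sq ?_ (by positivity)
    have : y^2 * y'^2 * S^2 ≤ y^2 * y'^2 * (P * Q) := by gcongr
    nlinarith [sq_nonneg (y^2 * Q - y'^2 * P)]
  have h2 : (y * y' + S)^2 ≤ (y^2 + P) * (y'^2 + Q) := by nlinarith
  have h3 : (y^2 + P) * (y'^2 + Q) ≤ (4 * a * b) * (4 * a' * b') := by
    apply mul_le_mul h h' <;> positivity
  apply le_of_abs_le
  refine abs_le_of_sq_le_sq ?_ (by positivity)
  nlinarith [sq_nonneg (a * b' - a' * b)]

/-- Proposition 6 of Atamtürk–Gómez: convex hull of the set `R`. The continuous vector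
lives in `ℝ^{m+2}` (so `m` here plays the role of `m−2` in the paper), with the last two
coordinates `x_{m-1} = x ((Fin.last m).castSucc)` and `x_m = x (Fin.last (m+1))`, and
`d ∈ ℝ^m_+`. -/
theorem conv_R (n m : ℕ) (σ : ℝ) (c : Fin n → ℝ) (d : Fin m → ℝ)
    (hd : ∀ j, 0 ≤ d j)
    (hσc : ∀ z : Fin n → ℝ, (∀ i, z i = 0 ∨ z i = 1) → 0 ≤ σ + ∑ i, c i * z i) :
    convexHull ℝ {w : (Fin (m+2) → ℝ) × (Fin n → ℝ) |
      (∀ j, 0 ≤ w.1 j) ∧ (∀ i, w.2 i = 0 ∨ w.2 i = 1) ∧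
      σ + ∑ i, c i * w.2 i + ∑ j : Fin m, d j * (w.1 j.castSucc.castSucc)^2
        ≤ 4 * w.1 ((Fin.last m).castSucc) * w.1 (Fin.last (m+1))}
    = {w : (Fin (m+2) → ℝ) × (Fin n → ℝ) |
      (∀ j, 0 ≤ w.1 j) ∧ (∀ i, w.2 i ∈ Set.Icc (0:ℝ) 1) ∧
      ∃ y : ℝ, 0 ≤ y ∧
        (y, w.2) ∈ convexHull ℝ {yz : ℝ × (Fin n → ℝ) |
          (∀ i, yz.2 i = 0 ∨ yz.2 i = 1) ∧
          Real.sqrt (σ + ∑ i, c i * yz.2 i) ≤ yz.1} ∧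
        y^2 + ∑ j : Fin m, d j * (w.1 j.castSucc.castSucc)^2
          ≤ 4 * w.1 ((Fin.last m).castSucc) * w.1 (Fin.last (m+1))} := by
  apply Set.Subset.antisymm
  · apply convexHull_min
    · rintro ⟨x, z⟩ ⟨hx, hz, h⟩
      refine ⟨hx, ?_, Real.sqrt (σ + ∑ i, c i * z i), Real.sqrt_nonneg _,
        subset_convexHull ℝ _ ⟨hz, le_rfl⟩, ?_⟩
      · intro i
        rcases hz i with h | h <;> simp only at h ⊢ <;> rw [h] <;> simp
      · rw [Real.sq_sqrt (hσc z hz)]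
        exact h
    · rintro ⟨x, z⟩ ⟨hx, hz, y, hy, hyz, h⟩ ⟨x', z'⟩ ⟨hx', hz', y', hy', hyz', h'⟩ s t hs ht hst
      simp only at hx hz hyz h hx' hz' hyz' h'
      refine ⟨?_, ?_, s * y + t * y', by positivity, ?_, ?_⟩
      · intro j
        have := hx j
        have := hx' j
        simp only [Prod.fst_add, Prod.smul_fst, Pi.add_apply, Pi.smul_apply, smul_eq_mul]
        positivity
      · intro i
        exact (convex_Icc (0:ℝ) 1) (hz i) (hz' i) hs ht hst
      · exact (convex_convexHull ℝ _) hyz hyz' hs ht hst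
      · have ha := hx ((Fin.last m).castSucc)
        have hb := hx (Fin.last (m+1))
        have ha' := hx' ((Fin.last m).castSucc)
        have hb' := hx' (Fin.last (m+1))
        have hS := aux_cs d (fun j => x j.castSucc.castSucc) (fun j => x' j.castSucc.castSucc) hd
        have hP : 0 ≤ ∑ j : Fin m, d j * (x j.castSucc.castSucc)^2 :=
          Finset.sum_nonneg fun j _ => mul_nonneg (hd j) (sq_nonneg _)
        have hQ : 0 ≤ ∑ j : Fin m, d j * (x' j.castSucc.castSucc)^2 :=
          Finset.sum_nonneg fun j _ => mul_nonneg (hd j) (sq_nonneg _)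
        have hB := aux_B hP hQ hS ha hb ha' hb' h h'
        simp only [Prod.fst_add, Prod.smul_fst, Pi.add_apply, Pi.smul_apply, smul_eq_mul]
        have e : ∑ j : Fin m, d j * (s * x j.castSucc.castSucc + t * x' j.castSucc.castSucc)^2
            = s^2 * (∑ j : Fin m, d j * (x j.castSucc.castSucc)^2)
              + 2 * s * t * (∑ j : Fin m, d j * (x j.castSucc.castSucc * x' j.castSucc.castSucc))
              + t^2 * (∑ j : Fin m, d j * (x' j.castSucc.castSucc)^2) := by
          simp only [Finset.mul_sum, ← Finset.sum_add_distrib]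
          refine Finset.sum_congr rfl fun j _ => ?_
          ring
        rw [e]
        have k1 := mul_le_mul_of_nonneg_left h (sq_nonneg s)
        have k2 := mul_le_mul_of_nonneg_left h' (sq_nonneg t)
        have k3 := mul_le_mul_of_nonneg_left hB (by positivity : 0 ≤ 2 * s * t)
        linarith
  · rintro ⟨x, z⟩ ⟨hx, hz, y, hy, hyz, h⟩
    simp only at hx hz hyz h
    rcases hy.eq_or_lt with rfl | hy
    · set C := convexHull ℝ {w : (Fin (m+2) → ℝ) × (Fin n → ℝ) |
        (∀ j, 0 ≤ w.1 j) ∧ (∀ i, w.2 i = 0 ∨ w.2 i = 1) ∧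
        σ + ∑ i, c i * w.2 i + ∑ j : Fin m, d j * (w.1 j.castSucc.castSucc)^2
          ≤ 4 * w.1 ((Fin.last m).castSucc) * w.1 (Fin.last (m+1))} with hC
      have key : convexHull ℝ {yz : ℝ × (Fin n → ℝ) |
          (∀ i, yz.2 i = 0 ∨ yz.2 i = 1) ∧
          Real.sqrt (σ + ∑ i, c i * yz.2 i) ≤ yz.1} ⊆
          {p : ℝ × (Fin n → ℝ) | 0 ≤ p.1 ∧ (p.1 = 0 → (x, p.2) ∈ C)} := by
        apply convexHull_min
        · rintro ⟨v, w⟩ ⟨hw, hv⟩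
          refine ⟨(Real.sqrt_nonneg _).trans hv, fun hv0 => subset_convexHull ℝ _ ⟨hx, hw, ?_⟩⟩
          simp only at hv hv0 ⊢
          rw [hv0] at hv
          have := Real.sqrt_eq_zero'.1 (le_antisymm hv (Real.sqrt_nonneg _))
          linarith
        · rintro ⟨v, w⟩ ⟨hv, hw⟩ ⟨v', w'⟩ ⟨hv', hw'⟩ s t hs ht hst
          simp only at hv hw hv' hw'
          refine ⟨?_, ?_⟩
          · simp only [Prod.fst_add, Prod.smul_fst, smul_eq_mul]
            positivity
          · intro h0
            simp only [Prod.fst_add, Prod.smul_fst, smul_eq_mul] at h0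
            have p1 := mul_nonneg hs hv
            have p2 := mul_nonneg ht hv'
            have q1 : s * v = 0 := by linarith
            have q2 : t * v' = 0 := by linarith
            rcases mul_eq_zero.1 q1 with s0 | v0
            · have t1 : t = 1 := by linarith
              subst s0 t1
              simpa using hw' (by simpa using q2)
            · rcases mul_eq_zero.1 q2 with t0 | v0'
              · have s1 : s = 1 := by linarith
                subst t0 s1
                simpa using hw v0
              · have := (convex_convexHull ℝ _) (hw v0) (hw' v0') hs ht hst
                have e : s • (x, w) + t • (x, w') = (x, s • w + t • w') := by
                  ext j
                  · simp [← add_mul, hst]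
                  · simp
                rw [e] at this
                exact this
      exact (key hyz).2 rfl
    · let T : ℝ × (Fin n → ℝ) →ₗ[ℝ] (Fin (m+2) → ℝ) × (Fin n → ℝ) :=
        LinearMap.prodMap (LinearMap.toSpanSingleton ℝ _ (y⁻¹ • x)) LinearMap.id
      have hT : ∀ v w, T (v, w) = (v • y⁻¹ • x, w) := fun v w => rfl
      have e : T (y, z) = (x, z) := by
        rw [hT, smul_smul, mul_inv_cancel₀ hy.ne', one_smul]
      rw [← e]
      have hm := Set.mem_image_of_mem T hyz
      rw [T.image_convexHull] at hm
      refine convexHull_mono ?_ hm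
      rintro _ ⟨⟨v, w⟩, ⟨hw, hv⟩, rfl⟩
      rw [hT]
      simp only at hw hv
      have hv0 : 0 ≤ v := (Real.sqrt_nonneg _).trans hv
      refine ⟨?_, hw, ?_⟩
      · intro j
        have := hx j
        simp only [Pi.smul_apply, smul_eq_mul]
        positivity
      · have hv2 := (Real.sqrt_le_left hv0).1 hv
        simp only [Pi.smul_apply, smul_eq_mul]
        have e : ∑ j : Fin m, d j * (v * (y⁻¹ * x j.castSucc.castSucc))^2
            = (v * y⁻¹)^2 * ∑ j : Fin m, d j * (x j.castSucc.castSucc)^2 := by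
          rw [Finset.mul_sum]
          refine Finset.sum_congr rfl fun j _ => ?_
          ring
        rw [e]
        have k := mul_le_mul_of_nonneg_left h (sq_nonneg (v * y⁻¹))
        have e2 : (v * y⁻¹)^2 * y^2 = v^2 := by field_simp
        rw [mul_add, e2] at k
        linarith
end

section
/- Let p ≥ 1, η₂ ∈ {0,1}, and define f(z) := (Σ_{i∈[n]} z_i + η₂)^{1/p} for z ∈ {0,1}^n (which equals the ℓ_p-norm of the vector [z; η₂] for binary z). Then {(x,t,z) ∈ ℝ^m_+ × ℝ_+ × {0,1}^n : (Σ_{j∈[m]} x_j^p + Σ_{i∈[n]} z_i^p + η₂)^{1/p} ≤ t} = {(x,t,z) ∈ ℝ^m_+ × ℝ_+ × {0,1}^n : ∃ y ∈ ℝ such that y ≥ f(z) and (y^p + Σ_{j∈[m]} x_j^p)^{1/p} ≤ t}. -/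
/-- DR-CCP norm constraint: for `p ≥ 1` and `η₂ ∈ {0,1}`, the set
`{(x,t,z) ∈ ℝ^m_+ × ℝ_+ × {0,1}^n : ‖[x; z; η₂]‖_p ≤ t}` equals its lifted version with
an epigraph variable `y ≥ f(z) = (Σ_i z_i + η₂)^{1/p}` (for binary `z`, `z_i^p = z_i`).
Here real exponentiation is `Real.rpow`. -/
theorem drccp_norm_lifted (n m : ℕ) (p : ℝ) (hp : 1 ≤ p)
    (η₂ : ℝ) (hη : η₂ = 0 ∨ η₂ = 1) :
    {w : (Fin m → ℝ) × ℝ × (Fin n → ℝ) |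
      (∀ j, 0 ≤ w.1 j) ∧ 0 ≤ w.2.1 ∧ (∀ i, w.2.2 i = 0 ∨ w.2.2 i = 1) ∧
      (∑ j, (w.1 j) ^ p + ∑ i, (w.2.2 i) ^ p + η₂) ^ (1/p) ≤ w.2.1}
    = {w : (Fin m → ℝ) × ℝ × (Fin n → ℝ) |
      (∀ j, 0 ≤ w.1 j) ∧ 0 ≤ w.2.1 ∧ (∀ i, w.2.2 i = 0 ∨ w.2.2 i = 1) ∧
      ∃ y : ℝ, (∑ i, w.2.2 i + η₂) ^ (1/p) ≤ y ∧
        (y ^ p + ∑ j, (w.1 j) ^ p) ^ (1/p) ≤ w.2.1} := by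
  have hp0 : p ≠ 0 := by linarith
  have hpi : 0 ≤ 1 / p := by positivity
  ext ⟨x, t, z⟩
  simp only [Set.mem_setOf_eq]
  refine and_congr_right fun hx => and_congr_right fun ht => and_congr_right fun hz => ?_
  have hzp : ∑ i, (z i) ^ p = ∑ i, z i := by
    refine Finset.sum_congr rfl fun i _ => ?_
    rcases hz i with h | h
    · rw [h, Real.zero_rpow hp0]
    · rw [h, Real.one_rpow]
  have hη0 : 0 ≤ η₂ := by rcases hη with h | h <;> rw [h] <;> norm_num
  have hz0 : 0 ≤ ∑ i, z i := by
    refine Finset.sum_nonneg fun i _ => ?_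
    rcases hz i with h | h <;> rw [h] <;> norm_num
  have hx0 : 0 ≤ ∑ j, (x j) ^ p := Finset.sum_nonneg fun j _ => Real.rpow_nonneg (hx j) p
  have hs : 0 ≤ ∑ i, z i + η₂ := add_nonneg hz0 hη0
  have hf : ((∑ i, z i + η₂) ^ (1 / p)) ^ p = ∑ i, z i + η₂ := by
    rw [← Real.rpow_mul hs, one_div_mul_cancel hp0, Real.rpow_one]
  rw [hzp, add_assoc]
  constructor
  · intro h
    refine ⟨_, le_rfl, ?_⟩
    rw [hf, add_comm]
    exact h
  · rintro ⟨y, hy, h⟩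
    refine le_trans (Real.rpow_le_rpow (add_nonneg hx0 hs) ?_ hpi) h
    have := Real.rpow_le_rpow (Real.rpow_nonneg hs (1 / p)) hy (by linarith : 0 ≤ p)
    rw [hf] at this
    linarith
end
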